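/- Let n ≥ 2 and let a ∈ (0,∞)ⁿ have pairwise distinct entries. Then, for every bounded measurable φ from (2n−2)×(2n−2) real antisymmetric matrices to ℝ satisfying φ(k' Y k'ᵀ) = φ(Y) for all k' ∈ O(2n−2): ∫_{O(2n)} φ((k · D(a) · kᵀ)_{[2n−2]}) d*k = ∫_{(0,∞)^{n−1}} φ(D(x)) · p(x) dx, where p(x) = [(2n−2)!/(n−1)!] · (Δ_{n−1}(x²)/Δ_n(a²)) · det M(x,a), and M(x,a) is the n×n matrix whose first row has all entries equal to 1 and whose (j+1,k)-entry, for j = 1,…,n−1 and k = 1,…,n, equals (a_k − x_j)·1{a_k ≥ x_j}. -/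

import Mathlib

open MeasureTheory Matrix
open scoped BigOperators

noncomputable section

instance matrixMeasurableSpace {l : Type*} [Fintype l] : MeasurableSpace (Matrix l l ℝ) :=
  inferInstanceAs (MeasurableSpace (l → l → ℝ))

/-- The orthogonal group `O(m)` as a subtype of `m × m` real matrices. -/
abbrev OG (m : ℕ) := Matrix.orthogonalGroup (Fin m) ℝ

/-- `t ^ w` for a real `t ≥ 0` and complex `w`, with the convention `0 ^ w = 0`. -/
def cpw (t : ℝ) (w : ℂ) : ℂ := if t = 0 then 0 else Complex.exp (w * Real.log t)

/-- The `2n × 2n` real antisymmetric matrix `D(a) = diag(a₁ J, …, aₙ J)`,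
`J = [[0,1],[-1,0]]`. -/
def Dmat {n : ℕ} (a : Fin n → ℝ) : Matrix (Fin (2 * n)) (Fin (2 * n)) ℝ :=
  Matrix.of fun i j =>
    if i.val / 2 = j.val / 2 then
      a ⟨i.val / 2, by have := i.isLt; omega⟩ *
        (if i.val % 2 = 0 ∧ j.val % 2 = 1 then 1
          else if i.val % 2 = 1 ∧ j.val % 2 = 0 then -1 else 0)
    else 0

/-- Vandermonde product `Δ_m(x) = ∏_{j<k} (x_k - x_j)`. -/
def vdm {m : ℕ} {R : Type*} [CommRing R] (x : Fin m → R) : R :=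
  ∏ p ∈ Finset.univ.filter (fun p : Fin m × Fin m => p.1 < p.2), (x p.2 - x p.1)

/-- `s_{n+1} := -n-1` convention: the `j`-th exponent `(s_j - s_{j+1})/2 - 1`. -/
def expo (n : ℕ) (s : Fin n → ℂ) (j : Fin n) : ℂ :=
  (s j - (if h : j.val + 1 < n then s ⟨j.val + 1, h⟩ else -(n : ℂ) - 1)) / 2 - 1

/-- The spherical-type group integral
`f_n(s,X) = ∫_{O(2n)} ∏_j det((kXkᵀ)_{[2j]})^{(s_j-s_{j+1})/2-1} d*k`. -/
def sphInt (n : ℕ) (μ : Measure (OG (2 * n))) (s : Fin n → ℂ)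
    (X : Matrix (Fin (2 * n)) (Fin (2 * n)) ℝ) : ℂ :=
  ∫ k : OG (2 * n), ∏ j : Fin n,
    cpw ((((k : Matrix (Fin (2 * n)) (Fin (2 * n)) ℝ) * X *
        (k : Matrix (Fin (2 * n)) (Fin (2 * n)) ℝ)ᵀ).submatrix
          (Fin.castLE (by have := j.isLt; omega : 2 * (j.val + 1) ≤ 2 * n))
          (Fin.castLE (by have := j.isLt; omega : 2 * (j.val + 1) ≤ 2 * n))).det)
      (expo n s j) ∂μ


/-- A bounded measurable `O(m)`-invariant test function on antisymmetric matrices. -/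
def IsInvTest (m : ℕ) (φ : Matrix (Fin m) (Fin m) ℝ → ℝ) : Prop :=
  Measurable φ ∧ (∃ C, ∀ X, |φ X| ≤ C) ∧
    ∀ X : Matrix (Fin m) (Fin m) ℝ, Xᵀ = -X →
      ∀ k ∈ Matrix.orthogonalGroup (Fin m) ℝ, φ (k * X * kᵀ) = φ X

/-- The matrix `M(x,a)`: first row all ones, `(j+1,k)` entry `(a_k - x_j)·1{a_k ≥ x_j}`. -/
def Mxa {n : ℕ} (x : Fin (n - 1) → ℝ) (a : Fin n → ℝ) (hn : 2 ≤ n) :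
    Matrix (Fin n) (Fin n) ℝ :=
  Matrix.of fun b c =>
    if hb : b.val = 0 then 1
    else
      if x ⟨b.val - 1, by have := b.isLt; omega⟩ ≤ a c then
        a c - x ⟨b.val - 1, by have := b.isLt; omega⟩
      else 0

/-!
Deleting one row and column of `k D(a) kᵀ`, with `k` Haar distributed, conditions on the last row
of `k`, which is uniform on the sphere: weighing with a Gaussian shows that its squared block
weights follow a Dirichlet law. The corank-one compression of a block-diagonal skew matrix with
frequencies `a` is orthogonally conjugate to one with frequencies `y`, where the `y²` are the roots
of a secular equation whose residues are those weights. Lagrange interpolation inverts the map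
from weights to roots, and a Cauchy-type Jacobian turns the Dirichlet law into a density
on the box of `y²` interlacing `a²`. The second row and column are deleted in the same way, now in
odd size, where the kernel contributes an extra weight. Integrating out the middle spectrum leaves
the volume of the `y` that interlace both `a` and `x`, which is the determinant of `M(x, a)`.
The restriction to increasing `a` and `x` is removed at the end by symmetrising over permutations.
-/

/-! ### The orthogonal group and the law of one row -/

instance instBorelSpaceMatrix {l : Type*} [Fintype l] : BorelSpace (Matrix l l ℝ) :=
  inferInstanceAs (BorelSpace (l → l → ℝ))

instance instSecondCountableTopologyMatrix {l : Type*} [Countable l] :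
    SecondCountableTopology (Matrix l l ℝ) :=
  inferInstanceAs (SecondCountableTopology (l → l → ℝ))

namespace OG

variable {m : ℕ}

instance instBorelSpace : BorelSpace (OG m) :=
  inferInstanceAs (BorelSpace {A : Matrix (Fin m) (Fin m) ℝ // A ∈ orthogonalGroup (Fin m) ℝ})

instance instSecondCountableTopology : SecondCountableTopology (OG m) :=
  TopologicalSpace.Subtype.secondCountableTopology (α := Matrix (Fin m) (Fin m) ℝ) _

lemma mul_transpose (k : OG m) : k.1 * k.1ᵀ = 1 := (mem_orthogonalGroup_iff _ _).mp k.2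

lemma transpose_mul (k : OG m) : k.1ᵀ * k.1 = 1 := (mem_orthogonalGroup_iff' _ _).mp k.2

lemma mem_of_mul_transpose {A : Matrix (Fin m) (Fin m) ℝ} (h : A * Aᵀ = 1) :
    A ∈ orthogonalGroup (Fin m) ℝ := (mem_orthogonalGroup_iff _ _).mpr h

instance instCompactSpace : CompactSpace (OG m) := by
  have hclosed : IsClosed (OG m : Set (Matrix (Fin m) (Fin m) ℝ)) := by
    have : (OG m : Set (Matrix (Fin m) (Fin m) ℝ)) = {A | A * star A = 1} :=
      Set.ext fun A => mem_orthogonalGroup_iff _ _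
    rw [this]
    exact isClosed_eq (by fun_prop) continuous_const
  have hcube : IsCompact (Set.univ.pi fun _ : Fin m =>
      Set.univ.pi fun _ : Fin m => Set.Icc (-1 : ℝ) 1) :=
    isCompact_univ_pi fun _ => isCompact_univ_pi fun _ => isCompact_Icc
  exact isCompact_iff_compactSpace.mp <| hcube.of_isClosed_subset hclosed fun A hA i _ j _ =>
    abs_le.mp (entry_norm_bound_of_unitary (𝕜 := ℝ) hA i j)

lemma continuous_vecMul : Continuous fun p : OG m × (Fin m → ℝ) => p.2 ᵥ* p.1.1 :=
  continuous_snd.matrix_vecMul (continuous_subtype_val.comp continuous_fst)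

lemma vecMul_dotProduct_vecMul (k : OG m) (u v : Fin m → ℝ) :
    (u ᵥ* k.1) ⬝ᵥ (v ᵥ* k.1) = u ⬝ᵥ v := by
  rw [← mulVec_transpose k.1 v, dotProduct_mulVec, vecMul_vecMul, mul_transpose, vecMul_one]

lemma abs_det (k : OG m) : |k.1.det| = 1 := by
  have h := congrArg det (mul_transpose k)
  rw [det_mul, det_transpose, det_one] at h
  rcases mul_self_eq_one_iff.mp h with h | h <;> simp [h]

lemma lintegral_comp_vecMul (k : OG m) {f : (Fin m → ℝ) → ENNReal} (hf : Measurable f) :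
    ∫⁻ u, f (u ᵥ* k.1) = ∫⁻ u, f u := by
  have hdet : |k.1ᵀ.det| = 1 := by rw [det_transpose, abs_det]
  have hmap := Real.map_matrix_volume_pi_eq_smul_volume_pi (abs_ne_zero.mp (hdet ▸ one_ne_zero))
  rw [abs_inv, hdet, inv_one, ENNReal.ofReal_one, one_smul] at hmap
  rw [← hmap, lintegral_map hf (toLin' k.1ᵀ).continuous_of_finiteDimensional.measurable, hmap]
  simp [mulVec_transpose]

lemma exists_row_eq (i : Fin m) {u : Fin m → ℝ} (hu : u ⬝ᵥ u = 1) : ∃ q : OG m, q.1 i = u := by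
  have hunit : Orthonormal ℝ (({i} : Set (Fin m)).domRestrict fun _ => WithLp.toLp 2 u) := by
    refine ⟨fun _ => ?_, fun i j hij => absurd (Subsingleton.elim i j) hij⟩
    rw [EuclideanSpace.norm_eq, Real.sqrt_eq_one, ← hu]
    simp [dotProduct, sq]
  obtain ⟨b, hb⟩ := hunit.exists_orthonormalBasis_extension_of_card_eq
    (E := EuclideanSpace ℝ (Fin m)) (by simp)
  refine ⟨⟨of fun i j => b i j, mem_of_mul_transpose ?_⟩, ?_⟩
  · ext i j
    rw [mul_apply, one_apply, ← orthonormal_iff_ite.mp b.orthonormal i j]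
    simp [PiLp.inner_apply, mul_comm]
  · ext j
    simp [hb i rfl]

end OG

/-- The unnormalised Gaussian density `exp (-|u|²)`, which serves as a rotation invariant weight
on `ℝᴺ`. -/
def gaussWeight {N : ℕ} (u : Fin N → ℝ) : ENNReal := ENNReal.ofReal (Real.exp (-(u ⬝ᵥ u)))

lemma measurable_gaussWeight {N : ℕ} : Measurable (gaussWeight (N := N)) := by
  unfold gaussWeight dotProduct
  fun_prop

namespace OG

variable {m : ℕ} (ν : Measure (OG m)) [ν.IsMulLeftInvariant]

lemma lintegral_vecMul_eq_lintegral_row (i : Fin m) {F : (Fin m → ℝ) → ENNReal}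
    (hF : ∀ c : ℝ, 0 < c → ∀ u, F (c • u) = F u) {u : Fin m → ℝ} (hu : u ≠ 0) :
    ∫⁻ k, F (u ᵥ* k.1) ∂ν = ∫⁻ k, F (k.1 i) ∂ν := by
  have hpos : 0 < u ⬝ᵥ u := by simpa using dotProduct_self_star_pos_iff.mpr hu
  set c := √(u ⬝ᵥ u)
  have hc : 0 < c := Real.sqrt_pos.mpr hpos
  have hcc : u ⬝ᵥ u = c * c := (Real.mul_self_sqrt hpos.le).symm
  obtain ⟨q, hq⟩ := exists_row_eq i (u := c⁻¹ • u) (by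
    rw [smul_dotProduct, dotProduct_smul, smul_eq_mul, smul_eq_mul, hcc]
    field_simp)
  have hrow (k : OG m) : F (u ᵥ* k.1) = F ((q * k).1 i) := by
    have : (q * k).1 i = c⁻¹ • (u ᵥ* k.1) := by
      rw [← smul_vecMul, ← hq]
      rfl
    rw [this, hF _ (inv_pos.mpr hc)]
  simp_rw [hrow]
  exact lintegral_mul_left_eq_self (fun k : OG m => F (k.1 i)) q

/-- Both sides average `F (u ᵥ* k)` over Haar `k` and Gaussian `u`, in the two possible orders. -/
lemma lintegral_row_mul_gaussWeight [IsProbabilityMeasure ν] (i : Fin m)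
    {F : (Fin m → ℝ) → ENNReal} (hFm : Measurable F)
    (hF : ∀ c : ℝ, 0 < c → ∀ u, F (c • u) = F u) :
    (∫⁻ k : OG m, F (k.1 i) ∂ν) * ∫⁻ u : Fin m → ℝ, gaussWeight u = ∫⁻ u, F u * gaussWeight u := by
  have hFvec : Measurable fun p : OG m × (Fin m → ℝ) => F (p.2 ᵥ* p.1.1) :=
    hFm.comp continuous_vecMul.measurable
  have hrot (k : OG m) :
      ∫⁻ u, F (u ᵥ* k.1) * gaussWeight u = ∫⁻ u, F u * gaussWeight u := by
    refine .trans ?_ (lintegral_comp_vecMul k (hFm.mul measurable_gaussWeight))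
    simp only [gaussWeight, vecMul_dotProduct_vecMul]
  have hne : ∀ᵐ u : Fin m → ℝ, u ≠ 0 := by
    have : Nonempty (Fin m) := ⟨i⟩
    simp [ae_iff]
  calc (∫⁻ k : OG m, F (k.1 i) ∂ν) * ∫⁻ u : Fin m → ℝ, gaussWeight u
      = ∫⁻ u, (∫⁻ k, F (u ᵥ* k.1) ∂ν) * gaussWeight u := by
        rw [← lintegral_const_mul _ measurable_gaussWeight]
        refine lintegral_congr_ae ?_
        filter_upwards [hne] with u hu
        rw [lintegral_vecMul_eq_lintegral_row ν i hF hu]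
    _ = ∫⁻ u, ∫⁻ k, F (u ᵥ* k.1) * gaussWeight u ∂ν := by
        refine lintegral_congr fun u => (lintegral_mul_const _ ?_).symm
        exact hFvec.comp (measurable_id.prodMk measurable_const)
    _ = ∫⁻ k : OG m, (∫⁻ u, F (u ᵥ* k.1) * gaussWeight u) ∂ν :=
        (lintegral_lintegral_swap
          (hFvec.mul (measurable_gaussWeight.comp measurable_snd)).aemeasurable).symm
    _ = ∫⁻ u, F u * gaussWeight u := by simp [hrot]

end OG

/-! ### Compressing a skew-symmetric matrix to a hyperplane -/

/-- The upper-left `N × N` block of an `(N + 1) × (N + 1)` matrix. -/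
def corner {N : ℕ} (X : Matrix (Fin (N + 1)) (Fin (N + 1)) ℝ) : Matrix (Fin N) (Fin N) ℝ :=
  X.submatrix Fin.castSucc Fin.castSucc

section Corner

variable {N : ℕ}

lemma corner_one : corner (1 : Matrix (Fin (N + 1)) (Fin (N + 1)) ℝ) = 1 :=
  submatrix_one _ (Fin.castSucc_injective N)

lemma corner_conj {G : Matrix (Fin (N + 1)) (Fin (N + 1)) ℝ}
    (hG : ∀ r : Fin N, G r.castSucc (Fin.last N) = 0) (X : Matrix (Fin (N + 1)) (Fin (N + 1)) ℝ) :
    corner (G * X * Gᵀ) = corner G * corner X * (corner G)ᵀ := by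
  ext r s
  simp [corner, mul_apply, Fin.sum_univ_castSucc, hG]

lemma transpose_conj_of_skew {m : ℕ} {X : Matrix (Fin m) (Fin m) ℝ} (hX : Xᵀ = -X)
    (G : Matrix (Fin m) (Fin m) ℝ) : (G * X * Gᵀ)ᵀ = -(G * X * Gᵀ) := by
  rw [transpose_mul, transpose_mul, hX, transpose_transpose, Matrix.neg_mul, Matrix.mul_neg,
    Matrix.mul_assoc]

lemma transpose_corner_of_skew {X : Matrix (Fin (N + 1)) (Fin (N + 1)) ℝ} (hX : Xᵀ = -X) :
    (corner X)ᵀ = -corner X := by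
  rw [corner, transpose_submatrix, hX]
  rfl

end Corner

/-- Invariance of a nonnegative function of skew-symmetric matrices under orthogonal conjugation;
the counterpart of the last clause of `IsInvTest` for `ENNReal`-valued functions. -/
def IsConjInvariant {m : ℕ} (ψ : Matrix (Fin m) (Fin m) ℝ → ENNReal) : Prop :=
  ∀ X : Matrix (Fin m) (Fin m) ℝ, Xᵀ = -X → ∀ k ∈ orthogonalGroup (Fin m) ℝ, ψ (k * X * kᵀ) = ψ X

lemma IsConjInvariant.corner_conj_eq_of_row_eq {N : ℕ} {ψ : Matrix (Fin N) (Fin N) ℝ → ENNReal}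
    (hψ : IsConjInvariant ψ) {D : Matrix (Fin (N + 1)) (Fin (N + 1)) ℝ} (hD : Dᵀ = -D)
    {k Q : OG (N + 1)} (h : k.1 (Fin.last N) = Q.1 (Fin.last N)) :
    ψ (corner (k.1 * D * k.1ᵀ)) = ψ (corner (Q.1 * D * Q.1ᵀ)) := by
  set G := k.1 * Q.1ᵀ
  have hkG : k.1 = G * Q.1 := by rw [Matrix.mul_assoc, OG.transpose_mul, Matrix.mul_one]
  have hGG : G * 1 * Gᵀ = 1 := by
    rw [transpose_mul, transpose_transpose, Matrix.mul_one, ← Matrix.mul_assoc, ← hkG,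
      OG.mul_transpose]
  have hlast (r : Fin N) : G r.castSucc (Fin.last N) = 0 :=
    calc G r.castSucc (Fin.last N) = k.1 r.castSucc ⬝ᵥ Q.1 (Fin.last N) := rfl
      _ = (k.1 * k.1ᵀ) r.castSucc (Fin.last N) := by rw [← h]; rfl
      _ = 0 := by rw [OG.mul_transpose, one_apply_ne (Fin.castSucc_ne_last r)]
  have hcorner : corner G ∈ orthogonalGroup (Fin N) ℝ := by
    apply OG.mem_of_mul_transpose
    rw [← corner_one, ← hGG, corner_conj hlast, corner_one, Matrix.mul_one]
  have hconj : k.1 * D * k.1ᵀ = G * (Q.1 * D * Q.1ᵀ) * Gᵀ := by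
    rw [hkG, transpose_mul]
    simp only [Matrix.mul_assoc]
  rw [hconj, corner_conj hlast]
  exact hψ _ (transpose_corner_of_skew (transpose_conj_of_skew hD _)) _ hcorner

lemma mulVec_dotProduct_of_skew {m : Type*} [Fintype m] {D : Matrix m m ℝ} (hD : Dᵀ = -D)
    (x z : m → ℝ) : (D *ᵥ x) ⬝ᵥ z = -(x ⬝ᵥ (D *ᵥ z)) := by
  rw [dotProduct_mulVec, ← mulVec_transpose, hD, neg_mulVec, neg_dotProduct, neg_neg]

/-- A plane of `u^⊥` on which the compression of `D` to `u^⊥` rotates with frequency `y`: it is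
spanned by `p` and `q`, scaled so that the component of `D *ᵥ p` along a unit vector `u` is `1`. -/
structure IsSkewMode {m : Type*} [Fintype m] (D : Matrix m m ℝ) (u p q : m → ℝ) (y : ℝ) :
    Prop where
  mulVec_fst : D *ᵥ p = u - y • q
  mulVec_snd : D *ᵥ q = y • p
  dotProduct_fst : u ⬝ᵥ p = 0
  dotProduct_snd : u ⬝ᵥ q = 0

namespace IsSkewMode

variable {m : Type*} [Fintype m] {D : Matrix m m ℝ} {u p q p' q' : m → ℝ} {y y' : ℝ}

lemma orthogonal (h : IsSkewMode D u p q y) (h' : IsSkewMode D u p' q' y') (hD : Dᵀ = -D)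
    (hy : y ^ 2 ≠ y' ^ 2) : p ⬝ᵥ p' = 0 ∧ q ⬝ᵥ q' = 0 ∧ p ⬝ᵥ q' = 0 ∧ q ⬝ᵥ p' = 0 := by
  have e₁ := mulVec_dotProduct_of_skew hD q p'
  have e₂ := mulVec_dotProduct_of_skew hD q' p
  have e₃ := mulVec_dotProduct_of_skew hD q q'
  have e₄ := mulVec_dotProduct_of_skew hD p p'
  simp only [h.mulVec_fst, h.mulVec_snd, h'.mulVec_fst, h'.mulVec_snd, smul_dotProduct,
    dotProduct_smul, sub_dotProduct, dotProduct_sub, smul_eq_mul, h.dotProduct_fst,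
    h'.dotProduct_fst, dotProduct_comm _ u, h.dotProduct_snd, h'.dotProduct_snd,
    dotProduct_comm q' q, dotProduct_comm p' p] at e₁ e₂ e₃ e₄
  have hne : y ^ 2 - y' ^ 2 ≠ 0 := sub_ne_zero.mpr hy
  refine ⟨?_, ?_, ?_, ?_⟩ <;> apply (mul_eq_zero.mp ?_).resolve_left hne
  · linear_combination y * e₁ - y' * e₂
  · linear_combination y' * e₁ - y * e₂
  · linear_combination y * e₃ + y' * e₄
  · linear_combination -y' * e₃ - y * e₄

lemma mul_fst_dotProduct_snd (h : IsSkewMode D u p q y) (hD : Dᵀ = -D) : y * (p ⬝ᵥ q) = 0 := by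
  have e := mulVec_dotProduct_of_skew hD q q
  rw [h.mulVec_snd, smul_dotProduct, dotProduct_smul, dotProduct_comm q p, smul_eq_mul] at e
  linarith

lemma snd_dotProduct_self (h : IsSkewMode D u p q y) (hD : Dᵀ = -D) (hy : y ≠ 0) :
    q ⬝ᵥ q = p ⬝ᵥ p := by
  have e := mulVec_dotProduct_of_skew hD q p
  simp only [h.mulVec_fst, h.mulVec_snd, smul_dotProduct, dotProduct_smul, dotProduct_sub,
    smul_eq_mul, dotProduct_comm q u, h.dotProduct_snd] at e
  exact mul_left_cancel₀ hy (by linarith)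

lemma fst_dotProduct_self_pos (h : IsSkewMode D u p q y) (hu : u ≠ 0) : 0 < p ⬝ᵥ p := by
  suffices p ≠ 0 by simpa using dotProduct_self_star_pos_iff.mpr this
  rintro rfl
  have huq : u = y • q := by simpa [sub_eq_zero] using h.mulVec_fst.symm
  refine hu (dotProduct_self_eq_zero.mp ?_)
  nth_rewrite 2 [huq]
  rw [dotProduct_smul, h.dotProduct_snd, smul_zero]

end IsSkewMode

/-- The `N × N` skew-symmetric matrix with diagonal blocks `y 0 • J, y 1 • J, …`; for odd `N` the
last block is truncated to the `1 × 1` zero block. It agrees with `Dmat` when `N` is even. -/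
def blockSkew (N : ℕ) (y : ℕ → ℝ) : Matrix (Fin N) (Fin N) ℝ :=
  of fun i j =>
    if i.val / 2 = j.val / 2 then
      y (i.val / 2) *
        (if i.val % 2 = 0 ∧ j.val % 2 = 1 then 1
          else if i.val % 2 = 1 ∧ j.val % 2 = 0 then -1 else 0)
    else 0

/-- Modes with pairwise distinct frequencies that together fill the `N`-dimensional space `u^⊥`.
For odd `N` the last mode contributes only its first vector, and its frequency may vanish. -/
structure IsSkewFrame {m : Type*} [Fintype m] (N : ℕ) (D : Matrix m m ℝ) (u : m → ℝ)
    (p q : ℕ → m → ℝ) (y : ℕ → ℝ) : Prop where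
  mode : ∀ i, 2 * i < N → IsSkewMode D u (p i) (q i) (y i)
  sq_ne_sq : ∀ i j, 2 * i < N → 2 * j < N → i ≠ j → y i ^ 2 ≠ y j ^ 2
  ne_zero : ∀ i, 2 * i + 1 < N → y i ≠ 0

/-- The sequence `p₀, q₀, p₁, q₁, …`, rescaled by the norms of the `pᵢ`. -/
def frameRow {m : Type*} [Fintype m] (p q : ℕ → m → ℝ) (r : ℕ) : m → ℝ :=
  (√(p (r / 2) ⬝ᵥ p (r / 2)))⁻¹ • if r % 2 = 0 then p (r / 2) else q (r / 2)

namespace IsSkewFrame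

variable {N : ℕ} {m : Type*} [Fintype m] {D : Matrix m m ℝ} {u : m → ℝ}
  {p q : ℕ → m → ℝ} {y : ℕ → ℝ}

lemma inv_sqrt_mul_dotProduct_self (h : IsSkewFrame N D u p q y) (hu : u ≠ 0) {i : ℕ}
    (hi : 2 * i < N) : (√(p i ⬝ᵥ p i))⁻¹ * ((√(p i ⬝ᵥ p i))⁻¹ * (p i ⬝ᵥ p i)) = 1 := by
  have hpos := (h.mode i hi).fst_dotProduct_self_pos hu
  rw [← mul_assoc, ← mul_inv, Real.mul_self_sqrt hpos.le, inv_mul_cancel₀ hpos.ne']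

lemma fst_dotProduct_snd (h : IsSkewFrame N D u p q y) (hD : Dᵀ = -D) {i : ℕ}
    (hi : 2 * i + 1 < N) : p i ⬝ᵥ q i = 0 :=
  (mul_eq_zero.mp ((h.mode i (by omega)).mul_fst_dotProduct_snd hD)).resolve_left (h.ne_zero i hi)

lemma snd_dotProduct_self (h : IsSkewFrame N D u p q y) (hD : Dᵀ = -D) {i : ℕ}
    (hi : 2 * i + 1 < N) : q i ⬝ᵥ q i = p i ⬝ᵥ p i :=
  (h.mode i (by omega)).snd_dotProduct_self hD (h.ne_zero i hi)

lemma dotProduct_frameRow (h : IsSkewFrame N D u p q y) (r : Fin N) : u ⬝ᵥ frameRow p q r = 0 := by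
  have hmode := h.mode (r.val / 2) (by omega)
  rw [frameRow, dotProduct_smul]
  split_ifs <;> simp [hmode.dotProduct_fst, hmode.dotProduct_snd]

lemma frameRow_dotProduct_frameRow (h : IsSkewFrame N D u p q y) (hD : Dᵀ = -D) (hu : u ≠ 0)
    (r s : Fin N) : frameRow p q r ⬝ᵥ frameRow p q s = if r = s then 1 else 0 := by
  have hr : 2 * (r.val / 2) < N := by omega
  simp only [frameRow, smul_dotProduct, dotProduct_smul, smul_eq_mul]
  by_cases hrs : r.val / 2 = s.val / 2
  · rw [← hrs]
    rcases Nat.mod_two_eq_zero_or_one r.val with hr2 | hr2 <;>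
      rcases Nat.mod_two_eq_zero_or_one s.val with hs2 | hs2
    · rw [if_pos hr2, if_pos hs2, h.inv_sqrt_mul_dotProduct_self hu hr, if_pos (by ext; omega)]
    · have hpq := h.fst_dotProduct_snd hD (show 2 * (r.val / 2) + 1 < N by omega)
      simp [hr2, hs2, show r ≠ s by rintro rfl; omega, hpq]
    · have hpq := h.fst_dotProduct_snd hD (show 2 * (r.val / 2) + 1 < N by omega)
      simp [hr2, hs2, show r ≠ s by rintro rfl; omega, dotProduct_comm (q _), hpq]
    · rw [if_neg (by omega), if_neg (by omega), h.snd_dotProduct_self hD (by omega),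
        h.inv_sqrt_mul_dotProduct_self hu hr, if_pos (by ext; omega)]
  · obtain ⟨hpp, hqq, hpq, hqp⟩ := (h.mode _ hr).orthogonal (h.mode (s.val / 2) (by omega)) hD
      (h.sq_ne_sq _ _ hr (by omega) hrs)
    rw [if_neg fun heq : r = s => hrs (heq ▸ rfl)]
    split_ifs <;> simp only [hpp, hqq, hpq, hqp, mul_zero]

lemma dotProduct_mulVec_frameRow_of_even (h : IsSkewFrame N D u p q y) {v : m → ℝ}
    (hv : v ⬝ᵥ u = 0) {s : Fin N} (hs : s.val % 2 = 0) :
    v ⬝ᵥ (D *ᵥ frameRow p q s) =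
      -(y (s / 2) * ((√(p (s / 2) ⬝ᵥ p (s / 2)))⁻¹ * (v ⬝ᵥ q (s / 2)))) := by
  rw [frameRow, if_pos hs, mulVec_smul, (h.mode _ (by omega)).mulVec_fst, dotProduct_smul,
    dotProduct_sub, hv, dotProduct_smul]
  simp only [smul_eq_mul]
  ring

lemma dotProduct_mulVec_frameRow_of_odd (h : IsSkewFrame N D u p q y) (v : m → ℝ) {s : Fin N}
    (hs : s.val % 2 = 1) :
    v ⬝ᵥ (D *ᵥ frameRow p q s) =
      y (s / 2) * ((√(p (s / 2) ⬝ᵥ p (s / 2)))⁻¹ * (v ⬝ᵥ p (s / 2))) := by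
  rw [frameRow, if_neg (by omega), mulVec_smul, (h.mode _ (by omega)).mulVec_snd, dotProduct_smul,
    dotProduct_smul]
  simp only [smul_eq_mul]
  ring

lemma frameRow_dotProduct_mulVec (h : IsSkewFrame N D u p q y) (hD : Dᵀ = -D) (hu : u ≠ 0)
    (r s : Fin N) : frameRow p q r ⬝ᵥ (D *ᵥ frameRow p q s) = blockSkew N y r s := by
  have hr : 2 * (r.val / 2) < N := by omega
  have hs := h.mode (s.val / 2) (by omega)
  have heven := h.dotProduct_mulVec_frameRow_of_even
    ((dotProduct_comm _ _).trans (h.dotProduct_frameRow r)) (s := s)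
  have hodd := h.dotProduct_mulVec_frameRow_of_odd (frameRow p q r) (s := s)
  by_cases hrs : r.val / 2 = s.val / 2
  · have hnorm := h.inv_sqrt_mul_dotProduct_self hu (hrs ▸ hr)
    rcases Nat.mod_two_eq_zero_or_one s.val with hs2 | hs2 <;>
      rcases Nat.mod_two_eq_zero_or_one r.val with hr2 | hr2
    · rcases mul_eq_zero.mp (hs.mul_fst_dotProduct_snd hD) with hpq | hpq <;>
        rw [heven hs2] <;> simp [frameRow, hrs, hr2, hs2, blockSkew, hpq]
    · have hqq := h.snd_dotProduct_self hD (show 2 * (s.val / 2) + 1 < N by omega)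
      rw [heven hs2]
      simp [frameRow, hrs, hr2, hs2, blockSkew, hqq, hnorm]
    · rw [hodd hs2]
      simp [frameRow, hrs, hr2, hs2, blockSkew, hnorm]
    · have hpq := h.fst_dotProduct_snd hD (show 2 * (s.val / 2) + 1 < N by omega)
      rw [hodd hs2]
      simp [frameRow, hrs, hr2, hs2, blockSkew, dotProduct_comm (q _), hpq]
  · obtain ⟨hpp, hqq, hpq, hqp⟩ := (h.mode _ hr).orthogonal hs hD
      (h.sq_ne_sq _ _ hr (by omega) hrs)
    have hzero : frameRow p q r ⬝ᵥ q (s / 2) = 0 ∧ frameRow p q r ⬝ᵥ p (s / 2) = 0 := by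
      rw [frameRow, smul_dotProduct, smul_dotProduct]
      split_ifs <;> simp [hpp, hqq, hpq, hqp]
    rcases Nat.mod_two_eq_zero_or_one s.val with hs2 | hs2
    · simp [heven hs2, hzero.1, blockSkew, hrs]
    · simp [hodd hs2, hzero.2, blockSkew, hrs]

end IsSkewFrame

lemma OG.exists_rows_eq {N : ℕ} {R : Fin N → Fin (N + 1) → ℝ} {u : Fin (N + 1) → ℝ}
    (hR : ∀ r s, R r ⬝ᵥ R s = if r = s then 1 else 0) (hu : u ⬝ᵥ u = 1)
    (huR : ∀ r, u ⬝ᵥ R r = 0) :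
    ∃ Q : OG (N + 1), Q.1 (Fin.last N) = u ∧ ∀ r : Fin N, Q.1 r.castSucc = R r := by
  set Q : Matrix (Fin (N + 1)) (Fin (N + 1)) ℝ :=
    of (Fin.snoc (α := fun _ => Fin (N + 1) → ℝ) R u)
  have hlast : Q (Fin.last N) = u := Fin.snoc_last (α := fun _ => Fin (N + 1) → ℝ) ..
  have hcast (r : Fin N) : Q r.castSucc = R r :=
    Fin.snoc_castSucc (α := fun _ => Fin (N + 1) → ℝ) ..
  refine ⟨⟨Q, mem_of_mul_transpose ?_⟩, hlast, hcast⟩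
  ext r s
  change Q r ⬝ᵥ Q s = _
  cases r using Fin.lastCases <;> cases s using Fin.lastCases <;>
    simp [hlast, hcast, hu, hR, huR, dotProduct_comm _ u, one_apply, Fin.castSucc_ne_last,
      (Fin.castSucc_ne_last _).symm]

lemma IsSkewFrame.exists_corner_eq_blockSkew {N : ℕ} {D : Matrix (Fin (N + 1)) (Fin (N + 1)) ℝ}
    {u : Fin (N + 1) → ℝ} {p q : ℕ → Fin (N + 1) → ℝ} {y : ℕ → ℝ}
    (h : IsSkewFrame N D u p q y) (hD : Dᵀ = -D) (hu : u ⬝ᵥ u = 1) :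
    ∃ Q : OG (N + 1), Q.1 (Fin.last N) = u ∧ corner (Q.1 * D * Q.1ᵀ) = blockSkew N y := by
  have hu0 : u ≠ 0 := by rintro rfl; simp at hu
  obtain ⟨Q, hlast, hcast⟩ := OG.exists_rows_eq (R := fun r => frameRow p q r)
    (h.frameRow_dotProduct_frameRow hD hu0) hu h.dotProduct_frameRow
  refine ⟨Q, hlast, ?_⟩
  ext r s
  rw [← h.frameRow_dotProduct_mulVec hD hu0, ← hcast, ← hcast, corner, Matrix.mul_assoc]
  rfl

/-! ### Compressing a block-diagonal skew-symmetric matrix -/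

section BlockSkew

variable {N : ℕ}

lemma transpose_blockSkew (N : ℕ) (y : ℕ → ℝ) : (blockSkew N y)ᵀ = -blockSkew N y := by
  ext i j
  simp only [blockSkew, transpose_apply, Matrix.neg_apply, of_apply]
  by_cases h : i.val / 2 = j.val / 2
  · rw [if_pos h, if_pos h.symm, h]
    rcases Nat.mod_two_eq_zero_or_one i.val with hi | hi <;>
      rcases Nat.mod_two_eq_zero_or_one j.val with hj | hj <;> simp [hi, hj]
  · simp [h, Ne.symm h]

lemma blockSkew_mulVec_mul (y c : ℕ → ℝ) (u : Fin N → ℝ) :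
    blockSkew N y *ᵥ (fun r => c (r.val / 2) * u r) =
      fun r => c (r.val / 2) * (blockSkew N y *ᵥ u) r := by
  ext r
  simp only [mulVec, dotProduct, Finset.mul_sum]
  refine Finset.sum_congr rfl fun s _ => ?_
  by_cases h : r.val / 2 = s.val / 2
  · rw [h]
    ring
  · simp [blockSkew, h]

lemma blockSkew_mulVec_of_even (y : ℕ → ℝ) (v : Fin N → ℝ) {r s : Fin N} (hr : r.val % 2 = 0)
    (hs : s.val = r + 1) : (blockSkew N y *ᵥ v) r = y (r / 2) * v s := by
  rw [mulVec, dotProduct, Finset.sum_eq_single s _ (by simp)]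
  · simp [blockSkew, show s.val / 2 = r / 2 by omega, show s.val % 2 = 1 by omega, hr]
  · intro t _ hts
    by_cases h : r.val / 2 = t.val / 2
    · simp [blockSkew, hr, show t.val % 2 ≠ 1 from fun _ => hts (by ext; omega)]
    · simp [blockSkew, h]

lemma blockSkew_mulVec_of_odd (y : ℕ → ℝ) (v : Fin N → ℝ) {r s : Fin N} (hr : r.val % 2 = 1)
    (hs : s.val + 1 = r) : (blockSkew N y *ᵥ v) r = -(y (r / 2) * v s) := by
  rw [mulVec, dotProduct, Finset.sum_eq_single s _ (by simp)]
  · simp [blockSkew, show s.val / 2 = r / 2 by omega, show s.val % 2 = 0 by omega, hr]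
  · intro t _ hts
    by_cases h : r.val / 2 = t.val / 2
    · simp [blockSkew, hr, show t.val % 2 ≠ 0 from fun _ => hts (by ext; omega)]
    · simp [blockSkew, h]

lemma blockSkew_mulVec_blockSkew_mulVec {y : ℕ → ℝ} (hN : N % 2 = 1 → y (N / 2) = 0)
    (u : Fin N → ℝ) :
    blockSkew N y *ᵥ (blockSkew N y *ᵥ u) = fun r => -(y (r.val / 2) ^ 2 * u r) := by
  ext r
  rcases Nat.mod_two_eq_zero_or_one r.val with hr | hr
  · by_cases hlt : r.val + 1 < N
    · rw [blockSkew_mulVec_of_even y _ (s := ⟨r + 1, hlt⟩) hr rfl,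
        blockSkew_mulVec_of_odd y _ (s := r) (by simp; omega) rfl,
        show (r.val + 1) / 2 = r / 2 by omega]
      ring
    · have hzero : y (r / 2) = 0 := by
        rw [show r.val / 2 = N / 2 by omega, hN (by omega)]
      simp [mulVec, dotProduct, blockSkew, hzero]
  · have hpred : r.val - 1 + 1 = r := by omega
    rw [blockSkew_mulVec_of_odd y _ (s := ⟨r - 1, by omega⟩) hr hpred,
      blockSkew_mulVec_of_even y _ (s := r) (by simp; omega) hpred.symm,
      show (r.val - 1) / 2 = r / 2 by omega]
    ring

/-- The modes are found by solving `D p = u - y q`, `D q = y p`, that is `(D² + y²) q = y u`;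
orthogonality of `q` to `u` is the secular equation for `y`. -/
lemma isSkewMode_blockSkew {a : ℕ → ℝ} {u : Fin N → ℝ} {y : ℝ}
    (ha : N % 2 = 1 → a (N / 2) = 0) (hy : ∀ r : Fin N, y ^ 2 ≠ a (r.val / 2) ^ 2)
    (hsecular : y * ∑ r : Fin N, u r ^ 2 / (y ^ 2 - a (r.val / 2) ^ 2) = 0) :
    IsSkewMode (blockSkew N a) u
      (fun r => (y ^ 2 - a (r.val / 2) ^ 2)⁻¹ * (blockSkew N a *ᵥ u) r)
      (fun r => (y ^ 2 - a (r.val / 2) ^ 2)⁻¹ * (y • u) r) y where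
  mulVec_fst := by
    rw [blockSkew_mulVec_mul a (fun k => (y ^ 2 - a k ^ 2)⁻¹),
      blockSkew_mulVec_blockSkew_mulVec ha]
    ext r
    simp only [Pi.smul_apply, smul_eq_mul, Pi.sub_apply]
    have h := sub_ne_zero.mpr (hy r)
    field_simp
    ring
  mulVec_snd := by
    rw [blockSkew_mulVec_mul a (fun k => (y ^ 2 - a k ^ 2)⁻¹), mulVec_smul]
    ext r
    simp only [Pi.smul_apply, smul_eq_mul]
    ring
  dotProduct_fst := by
    have hskew := mulVec_dotProduct_of_skew (transpose_blockSkew N a) u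
      (fun r => (y ^ 2 - a (r.val / 2) ^ 2)⁻¹ * u r)
    rw [blockSkew_mulVec_mul a (fun k => (y ^ 2 - a k ^ 2)⁻¹)] at hskew
    have hcomm : (blockSkew N a *ᵥ u) ⬝ᵥ (fun r => (y ^ 2 - a (r.val / 2) ^ 2)⁻¹ * u r) =
        u ⬝ᵥ fun r => (y ^ 2 - a (r.val / 2) ^ 2)⁻¹ * (blockSkew N a *ᵥ u) r :=
      Finset.sum_congr rfl fun r _ => by ring
    linarith
  dotProduct_snd := by
    rw [← hsecular, Finset.mul_sum]
    exact Finset.sum_congr rfl fun r _ => by simp only [Pi.smul_apply, smul_eq_mul]; ring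

lemma exists_corner_blockSkew_eq_blockSkew {a y : ℕ → ℝ} {u : Fin (N + 1) → ℝ} (hu : u ⬝ᵥ u = 1)
    (ha : (N + 1) % 2 = 1 → a ((N + 1) / 2) = 0)
    (hya : ∀ i, 2 * i < N → ∀ r : Fin (N + 1), y i ^ 2 ≠ a (r.val / 2) ^ 2)
    (hyy : ∀ i j, 2 * i < N → 2 * j < N → i ≠ j → y i ^ 2 ≠ y j ^ 2)
    (hy0 : ∀ i, 2 * i + 1 < N → y i ≠ 0)
    (hsecular : ∀ i, 2 * i < N →
      y i * ∑ r : Fin (N + 1), u r ^ 2 / (y i ^ 2 - a (r.val / 2) ^ 2) = 0) :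
    ∃ Q : OG (N + 1), Q.1 (Fin.last N) = u ∧
      corner (Q.1 * blockSkew (N + 1) a * Q.1ᵀ) = blockSkew N y :=
  IsSkewFrame.exists_corner_eq_blockSkew
    ⟨fun i hi => isSkewMode_blockSkew ha (hya i hi) (hsecular i hi), hyy, hy0⟩
    (transpose_blockSkew _ _) hu

end BlockSkew

/-! ### Vandermonde products -/

section Vandermonde

variable {m : ℕ}

lemma vdm_eq_prod_Ioi {R : Type*} [CommRing R] (x : Fin m → R) :
    vdm x = ∏ i, ∏ j ∈ Finset.Ioi i, (x j - x i) := by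
  rw [vdm, Finset.prod_filter, ← Finset.univ_product_univ, Finset.prod_product]
  refine Finset.prod_congr rfl fun i _ => ?_
  rw [← Finset.prod_filter]
  congr 1
  ext j
  simp

lemma vdm_eq_det_vandermonde {R : Type*} [CommRing R] (x : Fin m → R) :
    vdm x = (vandermonde x).det := by
  rw [vdm_eq_prod_Ioi, det_vandermonde]

lemma vdm_succ {R : Type*} [CommRing R] (x : Fin (m + 1) → R) :
    vdm x = (∏ j : Fin m, (x j.succ - x 0)) * vdm (x ∘ Fin.succ) := by
  simp only [vdm_eq_prod_Ioi, Fin.prod_univ_succ, Fin.prod_Ioi_zero, Fin.prod_Ioi_succ,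
    Function.comp_apply]

lemma vdm_ne_zero {R : Type*} [CommRing R] [IsDomain R] {x : Fin m → R}
    (hx : Function.Injective x) : vdm x ≠ 0 := by
  rwa [vdm_eq_det_vandermonde, det_vandermonde_ne_zero_iff]

lemma vdm_pos {x : Fin m → ℝ} (hx : StrictMono x) : 0 < vdm x := by
  rw [vdm_eq_prod_Ioi]
  exact Finset.prod_pos fun i _ => Finset.prod_pos fun j hj =>
    sub_pos.mpr (hx (Finset.mem_Ioi.mp hj))

lemma vdm_nonneg {x : Fin m → ℝ} (hx : Monotone x) : 0 ≤ vdm x :=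
  Finset.prod_nonneg fun _ hp => sub_nonneg.mpr (hx (Finset.mem_filter.mp hp).2.le)

end Vandermonde

/-! ### Residues at the nodes and interlacing -/

/-- The derivative of `∏ k, (X - B k)` at the node `B j`. -/
def nodalDeriv {ι K : Type*} [Fintype ι] [DecidableEq ι] [CommRing K] (B : ι → K) (j : ι) : K :=
  ∏ k ∈ Finset.univ.erase j, (B j - B k)

/-- The residue of `∏ i, (X - b i) / ∏ k, (X - B k)` at the node `B j`. -/
def nodalResidue {ι κ K : Type*} [Fintype ι] [Fintype κ] [DecidableEq κ] [Field K]
    (B : κ → K) (b : ι → K) (j : κ) : K :=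
  (∏ i, (B j - b i)) / nodalDeriv B j

section Algebra

variable {m : ℕ} {K : Type*} [Field K] {B : Fin (m + 1) → K}

lemma nodalDeriv_ne_zero {ι : Type*} [Fintype ι] [DecidableEq ι] {B : ι → K}
    (hB : Function.Injective B) (j : ι) : nodalDeriv B j ≠ 0 :=
  Finset.prod_ne_zero_iff.mpr fun _ hk =>
    sub_ne_zero.mpr fun h => Finset.ne_of_mem_erase hk (hB h).symm

lemma nodalDeriv_eq_prod_succAbove {R : Type*} [CommRing R] (B : Fin (m + 1) → R)
    (j : Fin (m + 1)) : nodalDeriv B j = ∏ i : Fin m, (B j - B (j.succAbove i)) := by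
  rw [nodalDeriv, ← Finset.compl_singleton, ← Fin.image_succAbove_univ,
    Finset.prod_image fun _ _ _ _ h => Fin.succAbove_right_injective h]

lemma sum_eval_div_nodalDeriv (hB : Function.Injective B) {P : Polynomial K}
    (hP : P.natDegree ≤ m) : ∑ j, P.eval (B j) / nodalDeriv B j = P.coeff m := by
  have hdeg : P.degree < (Finset.univ : Finset (Fin (m + 1))).card :=
    Polynomial.degree_le_natDegree.trans_lt (by
      rw [Finset.card_univ, Fintype.card_fin]
      exact Nat.cast_lt.mpr (Nat.lt_succ_of_le hP))
  simpa [nodalDeriv] using (Lagrange.coeff_eq_sum hB.injOn hdeg).symm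

lemma sum_nodalResidue (hB : Function.Injective B) (b : Fin m → K) :
    ∑ j, nodalResidue B b j = 1 := by
  have hdeg : (Lagrange.nodal Finset.univ b).natDegree = m := by
    rw [Lagrange.natDegree_nodal, Finset.card_univ, Fintype.card_fin]
  have hlead := (Lagrange.nodal_monic (s := Finset.univ) (v := b)).coeff_natDegree
  rw [hdeg, ← sum_eval_div_nodalDeriv hB hdeg.le] at hlead
  simpa only [nodalResidue, Lagrange.eval_nodal] using hlead

lemma sum_nodalResidue_div (hB : Function.Injective B) (b : Fin m → K) (i : Fin m)
    (hb : ∀ j, b i ≠ B j) : ∑ j, nodalResidue B b j / (b i - B j) = 0 := by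
  have hdeg : (Lagrange.nodal (Finset.univ.erase i) b).natDegree < m := by
    rw [Lagrange.natDegree_nodal, Finset.card_erase_of_mem (Finset.mem_univ i), Finset.card_univ,
      Fintype.card_fin]
    have := i.pos
    omega
  have hsum := sum_eval_div_nodalDeriv hB hdeg.le
  rw [Polynomial.coeff_eq_zero_of_natDegree_lt hdeg] at hsum
  rw [← neg_eq_zero, ← hsum, ← Finset.sum_neg_distrib]
  refine Finset.sum_congr rfl fun j _ => ?_
  have hij := sub_ne_zero.mpr (hb j)
  have hDj := nodalDeriv_ne_zero hB j
  rw [nodalResidue, Lagrange.eval_nodal, ← Finset.mul_prod_erase Finset.univ _ (Finset.mem_univ i)]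
  field_simp
  ring

lemma sum_smul_nodal_erase_eq (B W : Fin (m + 1) → K) {b : Fin m → K} (hb : Function.Injective b)
    (hroot : ∀ i, (∑ j, W j • Lagrange.nodal (Finset.univ.erase j) B).eval (b i) = 0) :
    ∑ j, W j • Lagrange.nodal (Finset.univ.erase j) B =
      (∑ j, W j) • Lagrange.nodal Finset.univ b := by
  have hmem : ∑ j, W j • Lagrange.nodal (Finset.univ.erase j) B -
      (∑ j, W j) • Lagrange.nodal Finset.univ b ∈ Polynomial.degreeLT K m := by
    rw [Finset.sum_smul, ← Finset.sum_sub_distrib]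
    refine Submodule.sum_mem _ fun j _ => ?_
    have hdeg : (Lagrange.nodal (Finset.univ.erase j) B).degree = m := by
      rw [Lagrange.degree_nodal, Finset.card_erase_of_mem (Finset.mem_univ j)]
      simp
    rw [← smul_sub]
    refine Submodule.smul_mem _ _ (Polynomial.mem_degreeLT.mpr ?_)
    rw [← hdeg]
    refine Polynomial.degree_sub_lt_left ?_ Lagrange.nodal_ne_zero ?_
    · rw [hdeg, Lagrange.degree_nodal, Finset.card_univ, Fintype.card_fin]
    · rw [Lagrange.nodal_monic.leadingCoeff, Lagrange.nodal_monic.leadingCoeff]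
  refine Polynomial.eq_of_degree_sub_lt_of_eval_index_eq Finset.univ hb.injOn
    (by simpa using Polynomial.mem_degreeLT.mp hmem) fun i _ => ?_
  rw [hroot, Polynomial.eval_smul, Lagrange.eval_nodal_at_node (Finset.mem_univ i), smul_zero]

end Algebra

lemma abs_prod_nodalDeriv {m : ℕ} (b : Fin m → ℝ) : |∏ i, nodalDeriv b i| = |vdm b| ^ 2 := by
  have hsplit (i : Fin m) : nodalDeriv b i =
      (∏ j ∈ Finset.Ioi i, (b i - b j)) * ∏ j ∈ Finset.Iio i, (b i - b j) := by
    rw [← Finset.prod_disjUnion (Finset.disjoint_Ioi_Iio i), Finset.Ioi_disjUnion_Iio,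
      Finset.compl_singleton, nodalDeriv]
  have hIoi : |∏ i, ∏ j ∈ Finset.Ioi i, (b i - b j)| = |vdm b| := by
    simp only [vdm_eq_prod_Ioi, Finset.abs_prod, abs_sub_comm]
  have hIio : ∏ i, ∏ j ∈ Finset.Iio i, (b i - b j) = vdm b := by
    rw [vdm_eq_prod_Ioi]
    exact Finset.prod_comm' (by simp)
  simp only [hsplit]
  rw [Finset.prod_mul_distrib, abs_mul, hIoi, hIio, sq]

lemma det_prod_erase_sub_mul_vdm {m : ℕ} {R : Type*} [CommRing R] [Nontrivial R]
    (x b : Fin m → R) :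
    (of fun j i : Fin m => ∏ l ∈ Finset.univ.erase i, (x j - b l)).det * vdm b =
      vdm x * ∏ i, nodalDeriv b i := by
  set C : Matrix (Fin m) (Fin m) R :=
    of fun k i => (Lagrange.nodal (Finset.univ.erase i) b).coeff k
  have hfactor (x : Fin m → R) :
      (of fun j i : Fin m => ∏ l ∈ Finset.univ.erase i, (x j - b l)) = vandermonde x * C := by
    ext j i
    have hdeg : (Lagrange.nodal (Finset.univ.erase i) b).natDegree < m := by
      rw [Lagrange.natDegree_nodal, Finset.card_erase_of_mem (Finset.mem_univ i),
        Finset.card_univ, Fintype.card_fin]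
      have := i.pos
      omega
    rw [of_apply, ← Lagrange.eval_nodal, Polynomial.eval_eq_sum_range' hdeg,
      ← Fin.sum_univ_eq_sum_range fun k => Polynomial.coeff _ k * x j ^ k, mul_apply]
    exact Finset.sum_congr rfl fun k _ => mul_comm _ _
  have hdiag : (of fun j i : Fin m => ∏ l ∈ Finset.univ.erase i, (b j - b l)) =
      diagonal (nodalDeriv b) := by
    ext j i
    rcases eq_or_ne j i with rfl | h
    · simp [nodalDeriv]
    · rw [diagonal_apply_ne _ h, of_apply]
      exact Finset.prod_eq_zero (Finset.mem_erase.mpr ⟨h, Finset.mem_univ j⟩) (sub_self _)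
  rw [← det_diagonal, ← hdiag, hfactor x, hfactor b, det_mul, det_mul, vdm_eq_det_vandermonde,
    vdm_eq_det_vandermonde]
  ring

/-- The points `b` that strictly interlace the sequence `B`. -/
def interlacingBox {m : ℕ} (B : Fin (m + 1) → ℝ) : Set (Fin m → ℝ) :=
  {b | ∀ i, B i.castSucc < b i ∧ b i < B i.succ}

section Interlacing

variable {m : ℕ} {B : Fin (m + 1) → ℝ} {b c : Fin m → ℝ}

lemma strictMono_of_mem_interlacingBox (hB : Monotone B) (hb : b ∈ interlacingBox B) :
    StrictMono b := fun i l h =>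
  (hb i).2.trans_le ((hB (Fin.succ_le_castSucc_iff.mpr h)).trans (hb l).1.le)

lemma eq_index_of_mem_interlacingBox (hB : Monotone B) (hb : b ∈ interlacingBox B)
    (hc : c ∈ interlacingBox B) {i l : Fin m} (h : b i = c l) : i = l := by
  rcases lt_trichotomy i l with hil | hil | hil
  · linarith [(hb i).2, (hc l).1, hB (Fin.succ_le_castSucc_iff.mpr hil)]
  · exact hil
  · linarith [(hb i).1, (hc l).2, hB (Fin.succ_le_castSucc_iff.mpr hil)]

lemma nodalResidue_pos (hB : StrictMono B) (hb : b ∈ interlacingBox B) (j : Fin (m + 1)) :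
    0 < nodalResidue B b j := by
  rw [nodalResidue, nodalDeriv_eq_prod_succAbove, ← Finset.prod_div_distrib]
  refine Finset.prod_pos fun i _ => ?_
  obtain ⟨hlo, hhi⟩ := hb i
  rcases lt_or_ge i.castSucc j with h | h
  · have hle := hB.monotone (Fin.castSucc_lt_iff_succ_le.mp h)
    rw [Fin.succAbove_of_castSucc_lt _ _ h]
    exact div_pos (by linarith) (by linarith)
  · have hle := hB.monotone h
    rw [Fin.succAbove_of_le_castSucc _ _ h]
    exact div_pos_of_neg_of_neg (by linarith) (by linarith)

lemma nodalResidue_injOn (hB : StrictMono B) :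
    Set.InjOn (nodalResidue (ι := Fin m) B) (interlacingBox B) := by
  intro b hb c hc h
  have hpoly : Lagrange.nodal Finset.univ b = Lagrange.nodal Finset.univ c := by
    have hdeg (b : Fin m → ℝ) : (Lagrange.nodal Finset.univ b).degree <
        (Finset.univ : Finset (Fin (m + 1))).card := by
      rw [Lagrange.degree_nodal]
      simpa using Nat.cast_lt.mpr (Nat.lt_succ_self m)
    refine Polynomial.eq_of_degrees_lt_of_eval_index_eq Finset.univ hB.injective.injOn (hdeg b)
      (hdeg c) fun j _ => ?_
    have hj := congrFun h j
    rw [nodalResidue, nodalResidue, div_left_inj' (nodalDeriv_ne_zero hB.injective j)] at hj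
    simpa only [Lagrange.eval_nodal] using hj
  ext i
  have hroot := Lagrange.eval_nodal_at_node (v := b) (Finset.mem_univ i)
  rw [hpoly, Lagrange.eval_nodal] at hroot
  obtain ⟨l, -, hl⟩ := Finset.prod_eq_zero_iff.mp hroot
  have hil := sub_eq_zero.mp hl
  rw [hil, eq_index_of_mem_interlacingBox hB.monotone hb hc hil]

lemma nodalDeriv_castSucc_mul_nodalDeriv_succ_neg (hB : StrictMono B) (i : Fin m) :
    nodalDeriv B i.castSucc * nodalDeriv B i.succ < 0 := by
  rw [nodalDeriv_eq_prod_succAbove, nodalDeriv_eq_prod_succAbove, ← Finset.prod_mul_distrib,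
    ← Finset.mul_prod_erase Finset.univ _ (Finset.mem_univ i)]
  have hlt := hB (Fin.castSucc_lt_succ (i := i))
  refine mul_neg_of_neg_of_pos ?_ (Finset.prod_pos fun l hl => ?_)
  · rw [Fin.succAbove_castSucc_self, Fin.succAbove_succ_self]
    nlinarith
  · rcases lt_or_gt_of_ne (Finset.ne_of_mem_erase hl) with h | h
    · rw [Fin.succAbove_castSucc_of_lt _ _ h, Fin.succAbove_succ_of_le _ _ h.le]
      have := hB (Fin.castSucc_lt_castSucc_iff.mpr h)
      exact mul_pos (by linarith) (by linarith)
    · rw [Fin.succAbove_castSucc_of_le _ _ h.le, Fin.succAbove_succ_of_lt _ _ h]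
      have := hB (Fin.succ_lt_succ_iff.mpr h)
      exact mul_pos_of_neg_of_neg (by linarith) (by linarith)

lemma exists_mem_interlacingBox_eval_eq_zero (hB : StrictMono B) {f : Polynomial ℝ}
    {W : Fin (m + 1) → ℝ} (hW : ∀ j, 0 < W j) (hf : ∀ j, f.eval (B j) = W j * nodalDeriv B j) :
    ∃ b ∈ interlacingBox B, ∀ i, f.eval (b i) = 0 := by
  have hroot (i : Fin m) : ∃ t, (B i.castSucc < t ∧ t < B i.succ) ∧ f.eval t = 0 := by
    have hle := (hB (Fin.castSucc_lt_succ (i := i))).le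
    have hsign : f.eval (B i.castSucc) * f.eval (B i.succ) < 0 := by
      rw [hf, hf]
      nlinarith [mul_pos (hW i.castSucc) (hW i.succ),
        nodalDeriv_castSucc_mul_nodalDeriv_succ_neg hB i]
    rcases mul_neg_iff.mp hsign with ⟨h1, h2⟩ | ⟨h1, h2⟩
    · exact intermediate_value_Ioo' hle f.continuous.continuousOn ⟨h2, h1⟩
    · exact intermediate_value_Ioo hle f.continuous.continuousOn ⟨h1, h2⟩
  choose b hb hb0 using hroot
  exact ⟨b, hb, hb0⟩

/-- Interpolating the data `W j * nodalDeriv B j` gives a polynomial of degree `m` with alternating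
signs at the nodes, hence with one root in each gap. -/
lemma exists_nodalResidue_eq (hB : StrictMono B) {W : Fin (m + 1) → ℝ} (hW : ∀ j, 0 < W j) :
    ∃ b ∈ interlacingBox B, ∀ j, nodalResidue B b j = W j / ∑ k, W k := by
  set f : Polynomial ℝ := ∑ j, W j • Lagrange.nodal (Finset.univ.erase j) B with hf
  have hnode (j : Fin (m + 1)) : f.eval (B j) = W j * nodalDeriv B j := by
    rw [hf, Polynomial.eval_finsetSum, Finset.sum_eq_single j]
    · rw [Polynomial.eval_smul, Lagrange.eval_nodal, smul_eq_mul, nodalDeriv]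
    · intro k _ hk
      rw [Polynomial.eval_smul, Lagrange.eval_nodal_at_node
        (Finset.mem_erase.mpr ⟨hk.symm, Finset.mem_univ j⟩), smul_zero]
    · simp
  obtain ⟨b, hb, hb0⟩ := exists_mem_interlacingBox_eval_eq_zero hB hW hnode
  have hfactor : f = (∑ k, W k) • Lagrange.nodal Finset.univ b :=
    sum_smul_nodal_erase_eq B W
      (strictMono_of_mem_interlacingBox hB.monotone hb).injective hb0
  refine ⟨b, hb, fun j => ?_⟩
  have hsum : 0 < ∑ k, W k := Finset.sum_pos (fun k _ => hW k) Finset.univ_nonempty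
  have hj := hnode j
  rw [hfactor, Polynomial.eval_smul, Lagrange.eval_nodal, smul_eq_mul] at hj
  rw [nodalResidue, div_eq_div_iff (nodalDeriv_ne_zero hB.injective j) hsum.ne', mul_comm, hj]

end Interlacing

/-! ### The residue ratios as coordinates on the interlacing box -/

/-- The positive orthant. -/
def posOrthant (ι : Type*) : Set (ι → ℝ) := {w | ∀ j, 0 < w j}

/-- The residues at the nodes `B 1, …, B m` relative to the residue at `B 0`. -/
def residueRatio {m : ℕ} (B : Fin (m + 1) → ℝ) (b : Fin m → ℝ) (j : Fin m) : ℝ :=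
  nodalResidue B b j.succ / nodalResidue B b 0

/-- The matrix of partial derivatives of `residueRatio B`, valid away from `b i = B 0`. -/
def residueRatioJacobian {m : ℕ} (B : Fin (m + 1) → ℝ) (b : Fin m → ℝ) :
    Matrix (Fin m) (Fin m) ℝ :=
  diagonal (fun j : Fin m => nodalDeriv B 0 / nodalDeriv B j.succ * (B j.succ - B 0) /
      ∏ l, (B 0 - b l)) *
    (of fun j i => ∏ l ∈ Finset.univ.erase i, (B j.succ - b l)) *
    diagonal (fun i => (B 0 - b i)⁻¹)

section ResidueRatio

variable {m : ℕ} {B : Fin (m + 1) → ℝ} {b : Fin m → ℝ}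

lemma residueRatio_eq_mul_prod (B : Fin (m + 1) → ℝ) (b : Fin m → ℝ) (j : Fin m) :
    residueRatio B b j =
      nodalDeriv B 0 / nodalDeriv B j.succ * ∏ i, ((B j.succ - b i) / (B 0 - b i)) := by
  rw [residueRatio, nodalResidue, nodalResidue, Finset.prod_div_distrib, div_div_div_eq,
    div_mul_div_comm, mul_comm, mul_comm (nodalDeriv B 0)]

lemma hasFDerivAt_residueRatio (h : ∀ i, B 0 - b i ≠ 0) :
    HasFDerivAt (residueRatio B)
      (LinearMap.toContinuousLinearMap (toLin' (residueRatioJacobian B b))) b := by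
  rw [hasFDerivAt_pi']
  intro j
  have hfactor (i : Fin m) : HasFDerivAt (fun b : Fin m → ℝ => (B j.succ - b i) / (B 0 - b i))
      (((B j.succ - B 0) / (B 0 - b i) ^ 2) •
        (ContinuousLinearMap.proj i : (Fin m → ℝ) →L[ℝ] ℝ)) b := by
    have hd := ((hasDerivAt_id (b i)).const_sub (B j.succ)).div
      ((hasDerivAt_id (b i)).const_sub (B 0)) (h i)
    refine HasDerivAt.comp_hasFDerivAt (f := fun b : Fin m → ℝ => b i) b
      (hd.congr_deriv ?_) (hasFDerivAt_apply i b)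
    simp only [id_eq]
    ring
  have hprod := (HasFDerivAt.finsetProd fun i (_ : i ∈ Finset.univ) => hfactor i).const_mul
    (nodalDeriv B 0 / nodalDeriv B j.succ)
  simp only [← residueRatio_eq_mul_prod] at hprod
  refine hprod.congr_fderiv ?_
  ext v
  simp only [residueRatioJacobian, FunLike.coe_smul, FunLike.coe_sum,
    Pi.smul_apply, Finset.sum_apply, ContinuousLinearMap.proj_apply, smul_eq_mul, Finset.mul_sum,
    ContinuousLinearMap.comp_apply, LinearMap.coe_toContinuousLinearMap', toLin'_apply,
    mulVec, dotProduct, mul_diagonal, diagonal_mul, of_apply]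
  refine Finset.sum_congr rfl fun i _ => ?_
  have hne : ∏ l ∈ Finset.univ.erase i, (B 0 - b l) ≠ 0 :=
    Finset.prod_ne_zero_iff.mpr fun i _ => h i
  have hi := h i
  rw [← Finset.mul_prod_erase Finset.univ (fun l => B 0 - b l) (Finset.mem_univ i),
    Finset.prod_div_distrib]
  field_simp

lemma abs_det_residueRatioJacobian (hB : Function.Injective B) (hb : Function.Injective b)
    (h : ∀ i, B 0 - b i ≠ 0) :
    |(residueRatioJacobian B b).det| =
      (|nodalResidue B b 0| ^ (m + 1))⁻¹ * (|vdm b| / |vdm B|) := by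
  have hcauchy := congrArg abs (det_prod_erase_sub_mul_vdm (fun j : Fin m => B j.succ) b)
  have hnodes := abs_prod_nodalDeriv B
  have hsucc : |vdm B| = |∏ j : Fin m, (B j.succ - B 0)| * |vdm fun j : Fin m => B j.succ| := by
    rw [vdm_succ, abs_mul]
    rfl
  have hzero : |nodalDeriv B 0| = |∏ j : Fin m, (B j.succ - B 0)| := by
    simp only [nodalDeriv_eq_prod_succAbove, Finset.abs_prod, Fin.zero_succAbove,
      abs_sub_comm (B 0)]
  have hnodes0 := abs_ne_zero.mpr (nodalDeriv_ne_zero hB 0)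
  have hvdmB := abs_ne_zero.mpr (vdm_ne_zero hB)
  have hvdmb := abs_ne_zero.mpr (vdm_ne_zero hb)
  have hprod : |∏ l, (B 0 - b l)| ≠ 0 :=
    abs_ne_zero.mpr (Finset.prod_ne_zero_iff.mpr fun i _ => h i)
  rw [abs_mul, abs_mul, abs_prod_nodalDeriv] at hcauchy
  rw [Fin.prod_univ_succ, abs_mul] at hnodes
  rw [residueRatioJacobian, det_mul, det_mul, det_diagonal, det_diagonal, abs_mul, abs_mul,
    nodalResidue]
  simp only [Finset.prod_div_distrib, Finset.prod_mul_distrib, Finset.prod_inv_distrib,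
    Finset.prod_const, Finset.card_univ, Fintype.card_fin, abs_div, abs_mul, abs_pow, abs_inv]
  rw [← hzero] at hsucc ⊢
  have hS : |∏ j : Fin m, nodalDeriv B j.succ| = |vdm B| ^ 2 / |nodalDeriv B 0| := by
    rw [← hnodes]
    field_simp
  have hdet : |(of fun j i : Fin m => ∏ l ∈ Finset.univ.erase i, (B j.succ - b l)).det| =
      |vdm fun j : Fin m => B j.succ| * |vdm b| := by
    rw [← mul_left_inj' hvdmb, hcauchy]
    ring
  have hvdm : |vdm fun j : Fin m => B j.succ| = |vdm B| / |nodalDeriv B 0| := by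
    rw [hsucc]
    field_simp
  rw [hS, hdet, hvdm, div_pow]
  field_simp
  ring

lemma measurableSet_interlacingBox (B : Fin (m + 1) → ℝ) : MeasurableSet (interlacingBox B) := by
  have hpi : interlacingBox B = Set.univ.pi fun i => Set.Ioo (B i.castSucc) (B i.succ) := by
    ext
    simp [interlacingBox]
  rw [hpi]
  exact MeasurableSet.univ_pi fun _ => measurableSet_Ioo

lemma first_sub_ne_zero_of_mem_interlacingBox (hB : Monotone B) (hb : b ∈ interlacingBox B)
    (i : Fin m) : B 0 - b i ≠ 0 := by
  have hle := hB (Fin.zero_le i.castSucc)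
  linarith [(hb i).1]

lemma one_add_sum_residueRatio (hB : StrictMono B) (hb : b ∈ interlacingBox B) :
    1 + ∑ j, residueRatio B b j = 1 / nodalResidue B b 0 := by
  have hpos := nodalResidue_pos hB hb 0
  have hsum := sum_nodalResidue hB.injective b
  rw [Fin.sum_univ_succ] at hsum
  simp only [residueRatio]
  rw [← Finset.sum_div]
  field_simp
  exact hsum

lemma residueRatio_injOn (hB : StrictMono B) :
    Set.InjOn (residueRatio B) (interlacingBox B) := by
  intro b hb c hc h
  have hzero : nodalResidue B b 0 = nodalResidue B c 0 := by
    have hinv := one_add_sum_residueRatio hB hb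
    rw [h, one_add_sum_residueRatio hB hc] at hinv
    simpa using hinv.symm
  refine nodalResidue_injOn hB hb hc (funext fun j => Fin.cases hzero (fun j => ?_) j)
  have hj := congrFun h j
  rwa [residueRatio, residueRatio, hzero,
    div_left_inj' (nodalResidue_pos hB hc 0).ne'] at hj

lemma residueRatio_image (hB : StrictMono B) :
    residueRatio B '' interlacingBox B = posOrthant (Fin m) := by
  ext s
  constructor
  · rintro ⟨b, hb, rfl⟩ j
    exact div_pos (nodalResidue_pos hB hb _) (nodalResidue_pos hB hb _)
  · intro hs
    obtain ⟨b, hb, hW⟩ := exists_nodalResidue_eq hB (W := Fin.cons 1 s)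
      (Fin.cases (by simp) (by simpa [posOrthant] using hs))
    have hsum : ∑ k, (Fin.cons 1 s : Fin (m + 1) → ℝ) k ≠ 0 := by
      have hnonneg : 0 ≤ ∑ k, s k := Finset.sum_nonneg fun k _ => (hs k).le
      simp only [Fin.sum_univ_succ, Fin.cons_zero, Fin.cons_succ]
      positivity
    refine ⟨b, hb, funext fun j => ?_⟩
    rw [residueRatio, hW, hW, div_div_div_cancel_right₀ hsum, Fin.cons_succ, Fin.cons_zero, div_one]

lemma hasFDerivWithinAt_residueRatio (hB : Monotone B) :
    ∀ b ∈ interlacingBox B, HasFDerivWithinAt (residueRatio B)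
      (LinearMap.toContinuousLinearMap (toLin' (residueRatioJacobian B b)))
      (interlacingBox B) b := fun _ hb =>
  (hasFDerivAt_residueRatio
    (first_sub_ne_zero_of_mem_interlacingBox hB hb)).hasFDerivWithinAt

lemma setLIntegral_pos_eq_setLIntegral_interlacingBox (hB : StrictMono B)
    (F : (Fin m → ℝ) → ENNReal) :
    ∫⁻ s in posOrthant (Fin m), F s = ∫⁻ b in interlacingBox B,
      ENNReal.ofReal ((nodalResidue B b 0 ^ (m + 1))⁻¹ * (vdm b / vdm B)) *
        F (residueRatio B b) := by
  rw [← residueRatio_image hB, lintegral_image_eq_lintegral_abs_det_fderiv_mul volume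
    (measurableSet_interlacingBox B) (hasFDerivWithinAt_residueRatio hB.monotone)
    (residueRatio_injOn hB)]
  refine setLIntegral_congr_fun (measurableSet_interlacingBox B) fun b hb => ?_
  have hmono := strictMono_of_mem_interlacingBox hB.monotone hb
  rw [ContinuousLinearMap.det, LinearMap.coe_toContinuousLinearMap, LinearMap.det_toLin',
    abs_det_residueRatioJacobian hB.injective hmono.injective
      (first_sub_ne_zero_of_mem_interlacingBox hB.monotone hb),
    abs_of_pos (nodalResidue_pos hB hb 0), abs_of_pos (vdm_pos hmono), abs_of_pos (vdm_pos hB)]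

lemma exists_measurable_comp_residueRatio_eq (hB : StrictMono B) {Ψ : (Fin m → ℝ) → ENNReal}
    (hΨ : Measurable Ψ) : ∃ G : (Fin m → ℝ) → ENNReal, Measurable G ∧
      ∀ b ∈ interlacingBox B, G (residueRatio B b) = Ψ b := by
  have hemb := measurableEmbedding_of_fderivWithin (measurableSet_interlacingBox B)
    (hasFDerivWithinAt_residueRatio hB.monotone) (residueRatio_injOn hB)
  refine ⟨_, hemb.measurable_extend (hΨ.comp measurable_subtype_coe)
    (measurable_const (a := 0)), fun b hb => ?_⟩
  exact hemb.injective.extend_apply _ _ ⟨b, hb⟩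

end ResidueRatio

/-! ### Radial and block-radial integration -/

/-- The density at `t > 0` of `∑ i, x i ^ 2` under Lebesgue measure on `ι → ℝ`, where
`p = |ι| / 2`. -/
def sumSqDensity (p t : ℝ) : ENNReal :=
  ENNReal.ofReal (Real.pi ^ p / Real.Gamma p * t ^ (p - 1))

lemma measurable_sumSqDensity (p : ℝ) : Measurable (sumSqDensity p) := by
  unfold sumSqDensity
  fun_prop

lemma setLIntegral_Ioo_sumSqDensity {p t : ℝ} (hp : 0 < p) (ht : 0 ≤ t) :
    ∫⁻ s in Set.Ioo 0 t, sumSqDensity p s =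
      ENNReal.ofReal ((Real.pi * t) ^ p / Real.Gamma (p + 1)) := by
  have hint := (intervalIntegral.intervalIntegrable_rpow' (a := 0) (b := t) (r := p - 1)
    (by linarith)).const_mul (Real.pi ^ p / Real.Gamma p)
  rw [intervalIntegrable_iff_integrableOn_Ioo_of_le ht] at hint
  have := Real.Gamma_pos_of_pos hp
  have hnonneg : 0 ≤ᵐ[volume.restrict (Set.Ioo 0 t)]
      fun s => Real.pi ^ p / Real.Gamma p * s ^ (p - 1) :=
    (ae_restrict_iff' measurableSet_Ioo).mpr (.of_forall fun s hs =>
      mul_nonneg (by positivity) (Real.rpow_nonneg hs.1.le _))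
  unfold sumSqDensity
  rw [← ofReal_integral_eq_lintegral_ofReal hint hnonneg, ← integral_Ioc_eq_integral_Ioo,
    ← intervalIntegral.integral_of_le ht, intervalIntegral.integral_const_mul,
    integral_rpow (Or.inl (by linarith)), sub_add_cancel, Real.zero_rpow hp.ne', sub_zero,
    Real.Gamma_add_one hp.ne', Real.mul_rpow Real.pi_pos.le ht, div_mul_div_comm,
    mul_comm (Real.Gamma p)]

lemma volume_sum_sq_lt (ι : Type*) [Fintype ι] [Nonempty ι] {t : ℝ} (ht : 0 ≤ t) :
    volume {x : ι → ℝ | ∑ i, x i ^ 2 < t} = ENNReal.ofReal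
      ((Real.pi * t) ^ (Fintype.card ι / 2 : ℝ) / Real.Gamma (Fintype.card ι / 2 + 1)) := by
  have hball : (WithLp.toLp 2 : (ι → ℝ) → EuclideanSpace ℝ ι) ⁻¹' Metric.ball 0 √t =
      {x | ∑ i, x i ^ 2 < t} := by
    ext x
    simp [EuclideanSpace.norm_eq, Real.sqrt_lt_sqrt_iff, Finset.sum_nonneg, sq_nonneg]
  rw [← hball, (PiLp.volume_preserving_toLp ι).measure_preimage
    Metric.isOpen_ball.nullMeasurableSet, EuclideanSpace.volume_ball,
    ← ENNReal.ofReal_pow (Real.sqrt_nonneg t), ← ENNReal.ofReal_mul (by positivity),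
    ← mul_div_assoc, ← mul_pow, mul_comm, ← Real.sqrt_mul Real.pi_pos.le, Real.sqrt_eq_rpow,
    ← Real.rpow_natCast, ← Real.rpow_mul (by positivity), one_div_mul_eq_div]

lemma map_sum_sq (ι : Type*) [Fintype ι] [Nonempty ι] :
    Measure.map (fun x : ι → ℝ => ∑ i, x i ^ 2) volume =
      (volume.restrict (Set.Ioi 0)).withDensity (sumSqDensity (Fintype.card ι / 2)) := by
  have hcard : (0 : ℝ) < Fintype.card ι / 2 := by positivity
  have hmap (t : ℝ) : Measure.map (fun x : ι → ℝ => ∑ i, x i ^ 2) volume (Set.Iio t) =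
      volume {x : ι → ℝ | ∑ i, x i ^ 2 < t} :=
    Measure.map_apply (by fun_prop) measurableSet_Iio
  refine Measure.ext_of_generateFrom_of_iUnion _ (fun n : ℕ => Set.Iio (n : ℝ))
    (borel_eq_generateFrom_Iio ℝ ▸ BorelSpace.measurable_eq) isPiSystem_Iio
    (Set.iUnion_eq_univ_iff.mpr exists_nat_gt) (fun n => ⟨n, rfl⟩) (fun n => ?_) ?_
  · rw [hmap, volume_sum_sq_lt ι n.cast_nonneg]
    exact ENNReal.ofReal_ne_top
  · rintro _ ⟨t, rfl⟩
    rw [hmap, withDensity_apply _ measurableSet_Iio, Measure.restrict_restrict measurableSet_Iio,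
      Set.inter_comm, Set.Ioi_inter_Iio]
    rcases le_or_gt t 0 with ht | ht
    · rw [Set.Ioo_eq_empty_of_le ht, Measure.restrict_empty, lintegral_zero_measure]
      convert measure_empty (μ := (volume : Measure (ι → ℝ)))
      refine Set.eq_empty_of_forall_notMem fun x hx => ?_
      exact (hx.trans_le ht).not_ge (Finset.sum_nonneg fun i _ => sq_nonneg _)
    · rw [volume_sum_sq_lt ι ht.le, setLIntegral_Ioo_sumSqDensity hcard ht.le]

lemma lintegral_fin_prod {m : ℕ} (μ : Fin m → Measure ℝ) [∀ i, SigmaFinite (μ i)]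
    {f : Fin m → ℝ → ENNReal} (hf : ∀ i, Measurable (f i)) :
    ∫⁻ x, ∏ i, f i (x i) ∂Measure.pi μ = ∏ i, ∫⁻ t, f i t ∂μ i := by
  induction m with
  | zero => simp
  | succ m ih =>
    rw [← (measurePreserving_piFinSuccAbove μ 0).symm.lintegral_comp_emb
      (MeasurableEquiv.measurableEmbedding _)]
    simp only [Fin.prod_univ_succ, MeasurableEquiv.piFinSuccAbove_symm_apply,
      Fin.insertNthEquiv_apply, Fin.insertNth_zero', Fin.cons_zero, Fin.cons_succ,
      Fin.zero_succAbove]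
    rw [lintegral_prod_mul (g := fun x : Fin m → ℝ => ∏ i, f i.succ (x i)) (hf 0).aemeasurable
      (Measurable.aemeasurable (by fun_prop (disch := exact hf _))), ih (fun i => μ i.succ)
      fun i => hf i.succ]

lemma pi_withDensity {m : ℕ} (μ : Fin m → Measure ℝ) [∀ i, SigmaFinite (μ i)]
    {f : Fin m → ℝ → ENNReal} (hf : ∀ i, Measurable (f i))
    [∀ i, SigmaFinite ((μ i).withDensity (f i))] :
    Measure.pi (fun i => (μ i).withDensity (f i)) =
      (Measure.pi μ).withDensity fun x => ∏ i, f i (x i) := by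
  refine Measure.pi_eq fun s hs => ?_
  rw [withDensity_apply _ (MeasurableSet.univ_pi hs), Measure.restrict_pi_pi,
    lintegral_fin_prod _ hf]
  exact Finset.prod_congr rfl fun i _ => (withDensity_apply _ (hs i)).symm

lemma map_fibers {ι κ : Type*} [Fintype ι] [Fintype κ] [DecidableEq κ] (c : ι → κ) :
    Measure.map (fun (u : ι → ℝ) (j : κ) (r : {r // c r = j}) => u r) volume =
      Measure.pi fun _ => volume := by
  refine (Measure.pi_eq_generateFrom (fun j => generateFrom_pi) (fun j => isPiSystem_pi)
    (fun j => Measure.FiniteSpanningSetsIn.pi fun _ => volume.toFiniteSpanningSetsIn) ?_).symm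
  intro s hs
  choose t ht hts using hs
  obtain rfl : (fun j => Set.univ.pi (t j)) = s := funext hts
  have hpre : (fun (u : ι → ℝ) (j : κ) (r : {r // c r = j}) => u r) ⁻¹'
      (Set.univ.pi fun j => Set.univ.pi (t j)) = Set.univ.pi fun r => t (c r) ⟨r, rfl⟩ := by
    ext u
    simp only [Set.mem_preimage, Set.mem_univ_pi]
    exact ⟨fun h r => h _ ⟨r, rfl⟩, by rintro h _ ⟨r, rfl⟩; exact h r⟩
  rw [Measure.map_apply (by fun_prop)
    (MeasurableSet.univ_pi fun j => MeasurableSet.univ_pi fun r => by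
      simpa using ht j r (Set.mem_univ r)), hpre,
    volume_pi_pi]
  change _ = ∏ j, volume (Set.univ.pi (t j))
  simp only [volume_pi_pi]
  rw [← (Equiv.sigmaFiberEquiv c).prod_comp, Fintype.prod_sigma]
  refine Finset.prod_congr rfl fun j _ => Finset.prod_congr rfl ?_
  rintro ⟨r, rfl⟩ _
  rfl

/-- The squared Euclidean norms of the blocks of `u`, where `c` assigns coordinates to blocks. -/
def blockWeight {ι κ : Type*} [Fintype ι] [DecidableEq κ] (c : ι → κ) (u : ι → ℝ) (j : κ) : ℝ :=
  ∑ r with c r = j, u r ^ 2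

lemma measurable_blockWeight {ι κ : Type*} [Fintype ι] [DecidableEq κ] (c : ι → κ) :
    Measurable (blockWeight c) := by
  unfold blockWeight
  fun_prop

lemma sum_blockWeight {ι κ : Type*} [Fintype ι] [Fintype κ] [DecidableEq κ] (c : ι → κ)
    (u : ι → ℝ) : ∑ j, blockWeight c u j = u ⬝ᵥ u := by
  simp only [blockWeight, dotProduct, ← sq]
  exact Finset.sum_fiberwise _ _ _

lemma posOrthant_eq_pi (ι : Type*) : posOrthant ι = Set.univ.pi fun _ => Set.Ioi 0 := by
  ext
  simp [posOrthant]

lemma measurableSet_posOrthant (ι : Type*) [Countable ι] : MeasurableSet (posOrthant ι) := by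
  rw [posOrthant_eq_pi]
  exact MeasurableSet.univ_pi fun _ => measurableSet_Ioi

lemma map_blockWeight {ι : Type*} [Fintype ι] {m : ℕ} {c : ι → Fin m}
    (hc : Function.Surjective c) :
    Measure.map (blockWeight c) volume = (volume.restrict (posOrthant (Fin m))).withDensity
      fun w => ∏ j, sumSqDensity (Fintype.card {r // c r = j} / 2) (w j) := by
  have (j : Fin m) : Nonempty {r // c r = j} := let ⟨r, hr⟩ := hc j; ⟨⟨r, hr⟩⟩
  have hcomp : blockWeight c =
      (fun (x : (j : Fin m) → {r // c r = j} → ℝ) j => ∑ r, x j r ^ 2) ∘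
        fun (u : ι → ℝ) j r => u r := by
    ext u j
    exact Finset.sum_subtype _ (by simp) _
  have (j : Fin m) : SigmaFinite (Measure.map (fun x : {r // c r = j} → ℝ => ∑ r, x r ^ 2)
      volume) := by
    rw [map_sum_sq]
    exact SigmaFinite.withDensity_ofReal _
  have (j : Fin m) : SigmaFinite ((volume.restrict (Set.Ioi 0)).withDensity
      (sumSqDensity (Fintype.card {r // c r = j} / 2))) := by
    exact SigmaFinite.withDensity_ofReal _
  rw [hcomp, ← Measure.map_map (by fun_prop) (by fun_prop), map_fibers,
    Measure.pi_map_pi (f := fun j (x : {r // c r = j} → ℝ) => ∑ r, x r ^ 2)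
      (fun _ => Measurable.aemeasurable (by fun_prop))]
  simp only [map_sum_sq]
  rw [pi_withDensity _ fun _ => measurable_sumSqDensity _, ← Measure.restrict_pi_pi,
    posOrthant_eq_pi]
  rfl

lemma lintegral_rpow_mul_exp_neg_mul {a r : ℝ} (ha : 0 < a) (hr : 0 < r) :
    ∫⁻ t in Set.Ioi (0 : ℝ), ENNReal.ofReal (t ^ (a - 1) * Real.exp (-(r * t))) =
      ENNReal.ofReal ((1 / r) ^ a * Real.Gamma a) := by
  have := Real.Gamma_pos_of_pos ha
  have hval := Real.integral_rpow_mul_exp_neg_mul_Ioi ha hr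
  have hint := Integrable.of_integral_ne_zero (hval.trans_ne (by positivity))
  rw [← hval, ofReal_integral_eq_lintegral_ofReal hint]
  exact (ae_restrict_iff' measurableSet_Ioi).mpr (.of_forall fun t ht =>
    mul_nonneg (Real.rpow_nonneg ht.out.le _) (Real.exp_pos _).le)

lemma lintegral_gaussWeight (N : ℕ) [NeZero N] :
    ∫⁻ u : Fin N → ℝ, gaussWeight u = ENNReal.ofReal (Real.pi ^ (N / 2 : ℝ)) := by
  have hN : (0 : ℝ) < N / 2 := div_pos (Nat.cast_pos.mpr (NeZero.pos N)) two_pos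
  have hG := Real.Gamma_pos_of_pos hN
  have hmap : ∫⁻ u : Fin N → ℝ, gaussWeight u = ∫⁻ t, ENNReal.ofReal (Real.exp (-t))
      ∂Measure.map (fun u : Fin N → ℝ => ∑ i, u i ^ 2) volume := by
    rw [lintegral_map (by fun_prop) (by fun_prop)]
    simp only [gaussWeight, dotProduct, sq]
  have hdens (t : ℝ) (ht : 0 < t) : sumSqDensity (N / 2) t * ENNReal.ofReal (Real.exp (-t)) =
      ENNReal.ofReal (Real.pi ^ (N / 2 : ℝ) / Real.Gamma (N / 2)) *
        ENNReal.ofReal (t ^ (N / 2 - 1 : ℝ) * Real.exp (-(1 * t))) := by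
    rw [sumSqDensity, ← ENNReal.ofReal_mul (by positivity), ← ENNReal.ofReal_mul (by positivity),
      mul_assoc, one_mul]
  rw [hmap, map_sum_sq, Fintype.card_fin,
    lintegral_withDensity_eq_lintegral_mul _ (measurable_sumSqDensity _) (by fun_prop)]
  simp only [Pi.mul_apply]
  rw [setLIntegral_congr_fun measurableSet_Ioi hdens, lintegral_const_mul _ (by fun_prop),
    lintegral_rpow_mul_exp_neg_mul hN one_pos, ← ENNReal.ofReal_mul (by positivity), div_one,
    Real.one_rpow, one_mul, div_mul_cancel₀ _ hG.ne']

/-! ### The law of the block weights -/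

lemma setLIntegral_posOrthant_eq_smul {m : ℕ} {t : ℝ} (ht : 0 < t)
    (f : (Fin m → ℝ) → ENNReal) :
    ∫⁻ w in posOrthant (Fin m), f w =
      ∫⁻ s in posOrthant (Fin m), ENNReal.ofReal (t ^ m) * f (t • s) := by
  have himage : (fun s : Fin m → ℝ => t • s) '' posOrthant (Fin m) = posOrthant (Fin m) := by
    ext w
    refine ⟨?_, fun hw => ⟨t⁻¹ • w, fun j => mul_pos (inv_pos.mpr ht) (hw j), ?_⟩⟩
    · rintro ⟨s, hs, rfl⟩ j
      exact mul_pos ht (hs j)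
    · simp [smul_smul, ht.ne']
  have hdet : (t • ContinuousLinearMap.id ℝ (Fin m → ℝ)).det = t ^ m := by
    simp [ContinuousLinearMap.det]
  conv_lhs => rw [← himage]
  rw [lintegral_image_eq_lintegral_abs_det_fderiv_mul volume (measurableSet_posOrthant _)
    (f := fun s : Fin m → ℝ => t • s)
    (fun x _ => ((hasFDerivAt_id x).const_smul t).hasFDerivWithinAt)
    (smul_right_injective _ ht.ne').injOn]
  simp only [hdet, abs_of_pos (pow_pos ht m)]

lemma setLIntegral_posOrthant_succ {m : ℕ} {f : ℝ → (Fin m → ℝ) → ENNReal}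
    (hf : Measurable (Function.uncurry f)) :
    ∫⁻ w in posOrthant (Fin (m + 1)), f (w 0) (fun j => w j.succ) =
      ∫⁻ t in Set.Ioi (0 : ℝ), ∫⁻ s in posOrthant (Fin m), f t s := by
  have hpre : posOrthant (Fin (m + 1)) =
      ⇑(MeasurableEquiv.piFinSuccAbove (fun _ : Fin (m + 1) => ℝ) 0) ⁻¹'
        (Set.Ioi 0 ×ˢ posOrthant (Fin m)) :=
    Set.ext fun w => Fin.forall_fin_succ
  calc ∫⁻ w in posOrthant (Fin (m + 1)), f (w 0) (fun j => w j.succ)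
      = ∫⁻ x in Set.Ioi 0 ×ˢ posOrthant (Fin m), Function.uncurry f x := by
        rw [hpre]
        exact (volume_preserving_piFinSuccAbove (fun _ : Fin (m + 1) => ℝ) 0)
          |>.setLIntegral_comp_preimage_emb (MeasurableEquiv.measurableEmbedding _)
            (Function.uncurry f) _
    _ = _ := by rw [Measure.volume_eq_prod, setLIntegral_prod _ hf.aemeasurable]; rfl

/-- After the substitution `w j.succ = t * s j` the ratios `w j.succ / w 0` no longer depend on the
scale `w 0 = t`. -/
lemma setLIntegral_ratio_mul_exp_neg_sum {m : ℕ} {α : ℝ} (hα : 0 < α)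
    {G : (Fin m → ℝ) → ENNReal} (hG : Measurable G) :
    ∫⁻ w in posOrthant (Fin (m + 1)), G (fun j => w j.succ / w 0) *
        ENNReal.ofReal (w 0 ^ (α - 1) * Real.exp (-∑ j, w j)) =
      ∫⁻ s in posOrthant (Fin m), G s *
        ENNReal.ofReal ((1 / (1 + ∑ j, s j)) ^ (m + α) * Real.Gamma (m + α)) := by
  have hscale (t : ℝ) (ht : 0 < t) : ∫⁻ s in posOrthant (Fin m), G (fun j => s j / t) *
        ENNReal.ofReal (t ^ (α - 1) * Real.exp (-(t + ∑ j, s j))) =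
      ∫⁻ s in posOrthant (Fin m), G s *
        ENNReal.ofReal (t ^ (m + α - 1) * Real.exp (-((1 + ∑ j, s j) * t))) := by
    rw [setLIntegral_posOrthant_eq_smul ht]
    refine lintegral_congr fun s => ?_
    have hratio : (fun j => (t • s) j / t) = s := by
      ext j
      simp [ht.ne']
    have hexp : t + ∑ j, (t • s) j = (1 + ∑ j, s j) * t := by
      simp only [Pi.smul_apply, smul_eq_mul, ← Finset.mul_sum]
      ring
    rw [hratio, hexp, mul_left_comm, ← ENNReal.ofReal_mul (by positivity), add_sub_assoc,
      Real.rpow_add ht, Real.rpow_natCast, mul_assoc]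
  simp only [Fin.sum_univ_succ]
  rw [setLIntegral_posOrthant_succ (f := fun t s => G (fun j => s j / t) *
      ENNReal.ofReal (t ^ (α - 1) * Real.exp (-(t + ∑ j, s j))))
      ((hG.comp (by fun_prop)).mul (by fun_prop)),
    setLIntegral_congr_fun measurableSet_Ioi hscale,
    lintegral_lintegral_swap ((hG.comp measurable_snd).mul (by fun_prop)).aemeasurable]
  refine setLIntegral_congr_fun (measurableSet_posOrthant _) fun s hs => ?_
  have hsum : 0 ≤ ∑ j, s j := Finset.sum_nonneg fun j _ => (hs j).le
  rw [lintegral_const_mul _ (by fun_prop),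
    lintegral_rpow_mul_exp_neg_mul (by positivity) (by positivity)]

lemma setLIntegral_ratio_eq_setLIntegral_interlacingBox {m : ℕ} {B : Fin (m + 1) → ℝ}
    (hB : StrictMono B) {α : ℝ} (hα : 0 < α) {G : (Fin m → ℝ) → ENNReal} (hG : Measurable G) :
    ∫⁻ w in posOrthant (Fin (m + 1)), G (fun j => w j.succ / w 0) *
        ENNReal.ofReal (w 0 ^ (α - 1) * Real.exp (-∑ j, w j)) =
      ∫⁻ b in interlacingBox B, G (residueRatio B b) * ENNReal.ofReal (Real.Gamma (m + α) *
        (nodalResidue B b 0 ^ (α - 1) * (vdm b / vdm B))) := by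
  rw [setLIntegral_ratio_mul_exp_neg_sum hα hG, setLIntegral_pos_eq_setLIntegral_interlacingBox hB]
  refine setLIntegral_congr_fun (measurableSet_interlacingBox B) fun b hb => ?_
  have hres := nodalResidue_pos hB hb 0
  have hb' := vdm_pos (strictMono_of_mem_interlacingBox hB.monotone hb)
  have hB' := vdm_pos hB
  have hpow : nodalResidue B b 0 ^ ((m : ℝ) + α) =
      nodalResidue B b 0 ^ (m + 1) * nodalResidue B b 0 ^ (α - 1) := by
    rw [← Real.rpow_natCast, ← Real.rpow_add hres]
    congr 1
    push_cast
    ring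
  rw [mul_left_comm, ← ENNReal.ofReal_mul (by positivity), one_add_sum_residueRatio hB hb,
    one_div_one_div, hpow]
  congr 2
  field_simp

lemma ae_blockWeight_mem_posOrthant {ι : Type*} [Fintype ι] {m : ℕ} {c : ι → Fin m}
    (hc : Function.Surjective c) : ∀ᵐ u : ι → ℝ, blockWeight c u ∈ posOrthant (Fin m) := by
  refine ae_of_ae_map (measurable_blockWeight c).aemeasurable ?_
  rw [map_blockWeight hc]
  exact (withDensity_absolutelyContinuous _ _).ae_le (ae_restrict_mem (measurableSet_posOrthant _))

lemma gaussWeight_eq_blockWeight {N m : ℕ} (c : Fin N → Fin m) (u : Fin N → ℝ) :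
    gaussWeight u = ENNReal.ofReal (Real.exp (-∑ j, blockWeight c u j)) := by
  rw [sum_blockWeight, gaussWeight]

lemma card_fiber_zero {N m : ℕ} {c : Fin N → Fin (m + 1)}
    (hc : ∀ j : Fin m, Fintype.card {r // c r = j.succ} = 2) :
    (Fintype.card {r // c r = 0} : ℝ) / 2 = N / 2 - m := by
  have h := Fintype.card_congr (Equiv.sigmaFiberEquiv c)
  rw [Fintype.card_sigma, Fin.sum_univ_succ, Fintype.card_fin] at h
  simp only [hc, Finset.sum_const, Finset.card_univ, Fintype.card_fin, smul_eq_mul] at h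
  have hcast : (Fintype.card {r // c r = 0} + m * 2 : ℝ) = N := mod_cast h
  linarith

section Dirichlet

variable {N m : ℕ} {c : Fin N → Fin (m + 1)}

lemma half_card_sub_pos (hsurj : Function.Surjective c)
    (hc : ∀ j : Fin m, Fintype.card {r // c r = j.succ} = 2) : (0 : ℝ) < N / 2 - m := by
  obtain ⟨r, hr⟩ := hsurj 0
  have : Nonempty {r // c r = 0} := ⟨⟨r, hr⟩⟩
  rw [← card_fiber_zero hc]
  positivity

lemma lintegral_blockWeight_mul_gaussWeight (hsurj : Function.Surjective c)
    (hc : ∀ j : Fin m, Fintype.card {r // c r = j.succ} = 2) {F : (Fin (m + 1) → ℝ) → ENNReal}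
    (hF : Measurable F) :
    ∫⁻ u, F (blockWeight c u) * gaussWeight u =
      ENNReal.ofReal (Real.pi ^ (N / 2 : ℝ) / Real.Gamma (N / 2 - m)) *
        ∫⁻ w in posOrthant (Fin (m + 1)),
          F w * ENNReal.ofReal (w 0 ^ ((N : ℝ) / 2 - m - 1) * Real.exp (-∑ j, w j)) := by
  have hΓ := Real.Gamma_pos_of_pos (half_card_sub_pos hsurj hc)
  have hpow : Real.pi ^ (N / 2 : ℝ) = Real.pi ^ ((N : ℝ) / 2 - m) * Real.pi ^ m := by
    rw [← Real.rpow_natCast, ← Real.rpow_add Real.pi_pos, sub_add_cancel]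
  have hFexp : Measurable fun w => F w * ENNReal.ofReal (Real.exp (-∑ j, w j)) :=
    hF.mul (by fun_prop)
  have hdens : Measurable fun w : Fin (m + 1) → ℝ =>
      ∏ j, sumSqDensity (Fintype.card {r // c r = j} / 2) (w j) :=
    Finset.measurable_fun_prod _ fun j _ =>
      (measurable_sumSqDensity _).comp (measurable_pi_apply j)
  simp only [gaussWeight_eq_blockWeight c]
  rw [← lintegral_map hFexp (measurable_blockWeight c), map_blockWeight hsurj,
    lintegral_withDensity_eq_lintegral_mul _ hdens hFexp,
    ← lintegral_const_mul' _ _ ENNReal.ofReal_ne_top]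
  refine setLIntegral_congr_fun (measurableSet_posOrthant _) fun w hw => ?_
  have hw0 := hw 0
  simp only [Pi.mul_apply, Fin.prod_univ_succ, hc, card_fiber_zero hc, sumSqDensity,
    Nat.cast_ofNat, div_self (two_ne_zero' ℝ), sub_self, Real.rpow_zero, mul_one,
    Real.Gamma_one, div_one, Real.rpow_one, Finset.prod_const, Finset.card_univ,
    Fintype.card_fin]
  rw [← ENNReal.ofReal_pow Real.pi_pos.le, ← ENNReal.ofReal_mul (by positivity), mul_left_comm,
    mul_left_comm (ENNReal.ofReal _) (F _), ← ENNReal.ofReal_mul (by positivity),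
    ← ENNReal.ofReal_mul (by positivity), hpow]
  congr 2
  ring

/-- The Dirichlet law of the block weights, read in the coordinates `b` of the interlacing box. -/
lemma lintegral_blockWeight_ratio_mul_gaussWeight (hsurj : Function.Surjective c)
    (hc : ∀ j : Fin m, Fintype.card {r // c r = j.succ} = 2)
    {B : Fin (m + 1) → ℝ} (hB : StrictMono B) {G : (Fin m → ℝ) → ENNReal} (hG : Measurable G) :
    ∫⁻ u, G (fun j => blockWeight c u j.succ / blockWeight c u 0) * gaussWeight u =
      (∫⁻ u : Fin N → ℝ, gaussWeight u) * ∫⁻ b in interlacingBox B, G (residueRatio B b) *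
        ENNReal.ofReal (Real.Gamma (N / 2) / Real.Gamma (N / 2 - m) *
          (nodalResidue B b 0 ^ ((N : ℝ) / 2 - m - 1) * (vdm b / vdm B))) := by
  have : NeZero N := ⟨by rintro rfl; exact (hsurj 0).choose.elim0⟩
  have hα := half_card_sub_pos hsurj hc
  have := Real.Gamma_pos_of_pos hα
  rw [lintegral_blockWeight_mul_gaussWeight hsurj hc
      (F := fun w => G fun j => w j.succ / w 0) (hG.comp (by fun_prop)),
    setLIntegral_ratio_eq_setLIntegral_interlacingBox hB hα hG, lintegral_gaussWeight,
    ← lintegral_const_mul' _ _ ENNReal.ofReal_ne_top,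
    ← lintegral_const_mul' _ _ ENNReal.ofReal_ne_top]
  refine setLIntegral_congr_fun (measurableSet_interlacingBox B) fun b _ => ?_
  simp only [add_sub_cancel, mul_left_comm (ENNReal.ofReal _) (G _)]
  rw [← ENNReal.ofReal_mul (by positivity), ← ENNReal.ofReal_mul (by positivity)]
  congr 2
  ring

end Dirichlet

/-! ### Corank-one compression -/

/-- The extension of a finite sequence by zeros. -/
def zeroExtend {m : ℕ} (y : Fin m → ℝ) (i : ℕ) : ℝ := if h : i < m then y ⟨i, h⟩ else 0

lemma zeroExtend_of_lt {m : ℕ} (y : Fin m → ℝ) {i : ℕ} (h : i < m) : zeroExtend y i = y ⟨i, h⟩ :=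
  dif_pos h

lemma zeroExtend_of_le {m : ℕ} (y : Fin m → ℝ) {i : ℕ} (h : m ≤ i) : zeroExtend y i = 0 :=
  dif_neg h.not_gt

lemma measurable_zeroExtend {m : ℕ} (i : ℕ) : Measurable fun y : Fin m → ℝ => zeroExtend y i := by
  unfold zeroExtend
  split_ifs <;> fun_prop

lemma measurable_blockSkew_zeroExtend (N m : ℕ) :
    Measurable fun y : Fin m → ℝ => blockSkew N (zeroExtend y) := by
  refine measurable_pi_lambda _ fun i => measurable_pi_lambda _ fun j => ?_
  simp only [blockSkew, of_apply]
  split_ifs <;> first | exact (measurable_zeroExtend _).mul_const _ | exact measurable_const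

lemma blockWeight_smul {ι κ : Type*} [Fintype ι] [DecidableEq κ] (c : ι → κ) (t : ℝ) (u : ι → ℝ) :
    blockWeight c (t • u) = t ^ 2 • blockWeight c u := by
  ext j
  simp [blockWeight, Finset.mul_sum, mul_pow]

lemma sum_sq_mul_comp {ι κ : Type*} [Fintype ι] [Fintype κ] [DecidableEq κ] (c : ι → κ)
    (u : ι → ℝ) (g : κ → ℝ) : ∑ r, u r ^ 2 * g (c r) = ∑ j, blockWeight c u j * g j := by
  rw [← Finset.sum_fiberwise Finset.univ c]
  refine Finset.sum_congr rfl fun j _ => ?_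
  rw [blockWeight, Finset.sum_mul]
  exact Finset.sum_congr rfl fun r hr => by rw [(Finset.mem_filter.mp hr).2]

lemma OG.ae_row_mem_of_ae {N : ℕ} (ν : Measure (OG N)) [ν.IsMulLeftInvariant]
    [IsProbabilityMeasure ν] (i : Fin N) {s : Set (Fin N → ℝ)} (hs : MeasurableSet s)
    (hscale : ∀ t : ℝ, 0 < t → ∀ u, t • u ∈ s ↔ u ∈ s) (hae : ∀ᵐ u, u ∈ s) :
    ∀ᵐ k ∂ν, k.1 i ∈ s := by
  have : NeZero N := ⟨by rintro rfl; exact i.elim0⟩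
  have hind : Measurable (sᶜ.indicator (1 : (Fin N → ℝ) → ENNReal)) :=
    measurable_one.indicator hs.compl
  have hrow : Measurable fun k : OG N => k.1 i :=
    (measurable_pi_apply i).comp measurable_subtype_coe
  have hlaw := OG.lintegral_row_mul_gaussWeight ν i hind fun t ht u => by
    classical simp [Set.indicator_apply, hscale t ht]
  have hzero : ∫⁻ u, sᶜ.indicator (1 : (Fin N → ℝ) → ENNReal) u * gaussWeight u = 0 := by
    refine lintegral_eq_zero_of_ae_eq_zero ?_
    filter_upwards [hae] with u hu
    simp [hu]
  have hmass : ∫⁻ u : Fin N → ℝ, gaussWeight u ≠ 0 := by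
    rw [lintegral_gaussWeight]
    exact (ENNReal.ofReal_pos.mpr (by positivity)).ne'
  have hcomp : Measurable fun k : OG N => sᶜ.indicator (1 : (Fin N → ℝ) → ENNReal) (k.1 i) :=
    hind.comp hrow
  rw [hzero, mul_eq_zero, or_iff_left hmass, lintegral_eq_zero_iff hcomp] at hlaw
  filter_upwards [hlaw] with k hk
  by_contra hks
  simp [hks] at hk

/-- The spectral data of a corank-one compression: `c r` says which of the frequencies
`β 0 < ⋯ < β m` belongs to the coordinate `r` of `blockSkew (N + 1) a`. Every frequency but the
lowest has two coordinates; the lowest one has a single coordinate and is `a m = 0` when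
`N = 2 * m`, and has two coordinates and is positive when `N = 2 * m + 1`. -/
structure IsFrequencyLabelling {N m : ℕ} (a : ℕ → ℝ) (β : Fin (m + 1) → ℝ)
    (c : Fin (N + 1) → Fin (m + 1)) : Prop where
  strictMono : StrictMono β
  zero_nonneg : 0 ≤ β 0
  apply_div_two : ∀ r : Fin (N + 1), a (r.val / 2) = β (c r)
  surjective : Function.Surjective c
  card_fiber_succ : ∀ j : Fin m, Fintype.card {r // c r = j.succ} = 2
  lowest : (N = 2 * m ∧ a m = 0) ∨ (N = 2 * m + 1 ∧ 0 < β 0)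

lemma sq_strictMono {m : ℕ} {β : Fin (m + 1) → ℝ} (hβ : StrictMono β) (h0 : 0 ≤ β 0) :
    StrictMono fun i => β i ^ 2 := fun _ _ h =>
  pow_lt_pow_left₀ (hβ h) (h0.trans (hβ.monotone (Fin.zero_le _))) two_ne_zero

lemma ne_of_mem_interlacingBox {m : ℕ} {B : Fin (m + 1) → ℝ} {b : Fin m → ℝ} (hB : Monotone B)
    (hb : b ∈ interlacingBox B) (i : Fin m) (j : Fin (m + 1)) : b i ≠ B j := by
  rcases le_or_gt j i.castSucc with hj | hj
  · exact ((hB hj).trans_lt (hb i).1).ne'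
  · exact ((hb i).2.trans_le (hB (Fin.castSucc_lt_iff_succ_le.mp hj))).ne

namespace IsFrequencyLabelling

variable {N m : ℕ} {a : ℕ → ℝ} {β : Fin (m + 1) → ℝ} {c : Fin (N + 1) → Fin (m + 1)}

lemma apply_half_eq_zero (h : IsFrequencyLabelling a β c) (hN : (N + 1) % 2 = 1) :
    a ((N + 1) / 2) = 0 := by
  rcases h.lowest with ⟨rfl, ha⟩ | ⟨rfl, -⟩
  · rwa [show (2 * m + 1) / 2 = m by omega]
  · omega

lemma sum_blockWeight_mul_inv_eq_zero (h : IsFrequencyLabelling a β c) {u : Fin (N + 1) → ℝ}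
    {b : Fin m → ℝ} (hb : b ∈ interlacingBox fun j => β j ^ 2)
    (hres : ∀ j, nodalResidue (fun j => β j ^ 2) b j = blockWeight c u j) (i : Fin m) :
    ∑ r, u r ^ 2 / (b i - a (r.val / 2) ^ 2) = 0 := by
  have hsq := sq_strictMono h.strictMono h.zero_nonneg
  rw [← sum_nodalResidue_div hsq.injective b i (ne_of_mem_interlacingBox hsq.monotone hb i)]
  simp only [h.apply_div_two, hres, div_eq_mul_inv]
  exact sum_sq_mul_comp c u fun j => (b i - β j ^ 2)⁻¹

/-- The squared frequencies of the compression by the unit row `u` solve the secular equation whose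
residues at the squared frequencies `β j ^ 2` are the block weights of `u`. -/
lemma exists_corner_eq_blockSkew (h : IsFrequencyLabelling a β c) {u : Fin (N + 1) → ℝ}
    (hu : u ⬝ᵥ u = 1) {b : Fin m → ℝ} (hb : b ∈ interlacingBox fun j => β j ^ 2)
    (hres : ∀ j, nodalResidue (fun j => β j ^ 2) b j = blockWeight c u j) :
    ∃ Q : OG (N + 1), Q.1 (Fin.last N) = u ∧
      corner (Q.1 * blockSkew (N + 1) a * Q.1ᵀ) = blockSkew N (zeroExtend fun i => √(b i)) := by
  have hsq := sq_strictMono h.strictMono h.zero_nonneg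
  have hpos (i : Fin m) : 0 < b i := (sq_nonneg _).trans_lt (hb i).1
  set y := zeroExtend fun i => √(b i)
  have hy {i : ℕ} (hi : i < m) : y i ^ 2 = b ⟨i, hi⟩ := by
    rw [show y i = _ from zeroExtend_of_lt _ hi, Real.sq_sqrt (hpos _).le]
  have hy_ne {i : ℕ} (hi : i < m) : y i ≠ 0 :=
    sq_eq_zero_iff.not.mp (hy hi ▸ (hpos _).ne')
  have hy_zero {i : ℕ} (hi : ¬i < m) : y i = 0 := zeroExtend_of_le _ (not_lt.mp hi)
  have hβ_pos {i : ℕ} (hi : ¬i < m) (hiN : 2 * i < N) (j) : 0 < β j :=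
    (h.lowest.resolve_left (by omega)).2.trans_le (h.strictMono.monotone (Fin.zero_le j))
  refine exists_corner_blockSkew_eq_blockSkew hu h.apply_half_eq_zero (fun i hi r => ?_)
    (fun i j hi hj hij => ?_) (fun i hi => hy_ne ?_) (fun i _ => ?_)
  · rw [h.apply_div_two]
    by_cases him : i < m
    · rw [hy him]
      exact ne_of_mem_interlacingBox hsq.monotone hb _ _
    · rw [hy_zero him, zero_pow two_ne_zero]
      exact (pow_pos (hβ_pos him hi _) 2).ne
  · have hlow := h.lowest
    by_cases him : i < m <;> by_cases hjm : j < m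
    · rw [hy him, hy hjm]
      exact (strictMono_of_mem_interlacingBox hsq.monotone hb).injective.ne (by simpa using hij)
    · simpa [hy_zero hjm] using hy_ne him
    · rw [hy_zero him, zero_pow two_ne_zero]
      exact (pow_ne_zero 2 (hy_ne hjm)).symm
    · omega
  · have hlow := h.lowest
    omega
  · by_cases him : i < m
    · rw [hy him, h.sum_blockWeight_mul_inv_eq_zero hb hres, mul_zero]
    · rw [hy_zero him, zero_mul]

lemma exists_corner_conj_eq (h : IsFrequencyLabelling a β c) {k : OG (N + 1)}
    (hk : blockWeight c (k.1 (Fin.last N)) ∈ posOrthant (Fin (m + 1))) :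
    ∃ b ∈ interlacingBox fun j => β j ^ 2,
      residueRatio (fun j => β j ^ 2) b = (fun j : Fin m =>
        blockWeight c (k.1 (Fin.last N)) j.succ / blockWeight c (k.1 (Fin.last N)) 0) ∧
      ∀ ψ : Matrix (Fin N) (Fin N) ℝ → ENNReal, IsConjInvariant ψ →
        ψ (corner (k.1 * blockSkew (N + 1) a * k.1ᵀ)) =
          ψ (blockSkew N (zeroExtend fun i => √(b i))) := by
  have hu : k.1 (Fin.last N) ⬝ᵥ k.1 (Fin.last N) = 1 := by
    simpa [mul_apply'] using congrFun₂ (OG.mul_transpose k) (Fin.last N) (Fin.last N)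
  obtain ⟨b, hb, hres⟩ :=
    exists_nodalResidue_eq (sq_strictMono h.strictMono h.zero_nonneg) hk
  simp only [sum_blockWeight, hu, div_one] at hres
  obtain ⟨Q, hQ, hcorner⟩ := h.exists_corner_eq_blockSkew hu hb hres
  refine ⟨b, hb, ?_, fun ψ hψ => ?_⟩
  · ext j
    rw [residueRatio, hres, hres]
  · rw [hψ.corner_conj_eq_of_row_eq (transpose_blockSkew _ a) hQ.symm, hcorner]

lemma lintegral_corner_conj (h : IsFrequencyLabelling a β c) (ν : Measure (OG (N + 1)))
    [ν.IsMulLeftInvariant] [IsProbabilityMeasure ν] {ψ : Matrix (Fin N) (Fin N) ℝ → ENNReal}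
    (hψm : Measurable ψ) (hψ : IsConjInvariant ψ) :
    ∫⁻ k, ψ (corner (k.1 * blockSkew (N + 1) a * k.1ᵀ)) ∂ν =
      ∫⁻ b in interlacingBox fun j => β j ^ 2, ψ (blockSkew N (zeroExtend fun i => √(b i))) *
        ENNReal.ofReal (Real.Gamma ((N + 1 : ℕ) / 2) / Real.Gamma ((N + 1 : ℕ) / 2 - m) *
          (nodalResidue (fun j => β j ^ 2) b 0 ^ (((N + 1 : ℕ) : ℝ) / 2 - m - 1) *
            (vdm b / vdm fun j => β j ^ 2))) := by
  have hsq := sq_strictMono h.strictMono h.zero_nonneg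
  obtain ⟨G, hG, hGeq⟩ := exists_measurable_comp_residueRatio_eq hsq
    (Ψ := fun b => ψ (blockSkew N (zeroExtend fun i => √(b i))))
    (hψm.comp ((measurable_blockSkew_zeroExtend N m).comp (by fun_prop)))
  have hweight (t : ℝ) (u : Fin (N + 1) → ℝ) := blockWeight_smul c t u
  have hae : ∀ᵐ k ∂ν, ψ (corner (k.1 * blockSkew (N + 1) a * k.1ᵀ)) = G fun j =>
      blockWeight c (k.1 (Fin.last N)) j.succ / blockWeight c (k.1 (Fin.last N)) 0 := by
    filter_upwards [OG.ae_row_mem_of_ae ν (Fin.last N)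
      ((measurableSet_posOrthant _).preimage (measurable_blockWeight c))
      (fun t ht u => by simp [posOrthant, hweight, ht])
      (ae_blockWeight_mem_posOrthant h.surjective)] with k hk
    obtain ⟨b, hb, hratio, hcorner⟩ := h.exists_corner_conj_eq hk
    rw [hcorner ψ hψ, ← hratio, hGeq b hb]
  have hmass0 : ∫⁻ u : Fin (N + 1) → ℝ, gaussWeight u ≠ 0 := by
    rw [lintegral_gaussWeight]
    exact (ENNReal.ofReal_pos.mpr (by positivity)).ne'
  have hmass : ∫⁻ u : Fin (N + 1) → ℝ, gaussWeight u ≠ ⊤ := by simp [lintegral_gaussWeight]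
  have hlaw := OG.lintegral_row_mul_gaussWeight ν (Fin.last N)
    (F := fun u => G fun j => blockWeight c u j.succ / blockWeight c u 0)
    (hG.comp (by have := measurable_blockWeight c; fun_prop)) fun t ht u => by
      congr 1 with j
      simp [hweight, mul_div_mul_left _ _ (pow_pos ht 2).ne']
  rw [lintegral_congr_ae hae]
  refine (ENNReal.mul_left_inj hmass0 hmass).mp ?_
  rw [hlaw, lintegral_blockWeight_ratio_mul_gaussWeight h.surjective h.card_fiber_succ hsq hG,
    mul_comm]
  congr 1
  exact setLIntegral_congr_fun (measurableSet_interlacingBox _) fun b hb => by rw [hGeq b hb]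

end IsFrequencyLabelling

lemma pos_of_mem_interlacingBox {m : ℕ} {β : Fin (m + 1) → ℝ} {y : Fin m → ℝ} (hβ : Monotone β)
    (h0 : 0 ≤ β 0) (hy : y ∈ interlacingBox β) (i : Fin m) : 0 < y i :=
  (h0.trans (hβ (Fin.zero_le _))).trans_lt (hy i).1

lemma sq_image_interlacingBox {m : ℕ} {β : Fin (m + 1) → ℝ} (hβ : Monotone β) (h0 : 0 ≤ β 0) :
    (fun y i => y i ^ 2) '' interlacingBox β = interlacingBox fun j => β j ^ 2 := by
  have hβ0 (j : Fin (m + 1)) : 0 ≤ β j := h0.trans (hβ (Fin.zero_le j))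
  ext b
  constructor
  · rintro ⟨y, hy, rfl⟩ i
    have hyi := pos_of_mem_interlacingBox hβ h0 hy i
    exact ⟨pow_lt_pow_left₀ (hy i).1 (hβ0 _) two_ne_zero,
      pow_lt_pow_left₀ (hy i).2 hyi.le two_ne_zero⟩
  · intro hb
    refine ⟨fun i => √(b i), fun i => ⟨Real.lt_sqrt_of_sq_lt (hb i).1,
      (Real.sqrt_lt' ?_).mpr (hb i).2⟩, ?_⟩
    · exact (hβ0 _).lt_of_ne' fun h => by
        simpa [h] using (((sq_nonneg _).trans_lt (hb i).1).trans (hb i).2).ne'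
    · ext i
      exact Real.sq_sqrt ((sq_nonneg _).trans_lt (hb i).1).le

lemma setLIntegral_interlacingBox_sq {m : ℕ} {β : Fin (m + 1) → ℝ} (hβ : Monotone β)
    (h0 : 0 ≤ β 0) (F : (Fin m → ℝ) → ENNReal) :
    ∫⁻ b in interlacingBox fun j => β j ^ 2, F b =
      ∫⁻ y in interlacingBox β, ENNReal.ofReal (∏ i, 2 * y i) * F fun i => y i ^ 2 := by
  have hpos {y : Fin m → ℝ} (hy : y ∈ interlacingBox β) := pos_of_mem_interlacingBox hβ h0 hy
  have hderiv (y : Fin m → ℝ) : HasFDerivAt (fun (y : Fin m → ℝ) i => y i ^ 2)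
      (LinearMap.toContinuousLinearMap (toLin' (diagonal fun i => 2 * y i))) y := by
    refine hasFDerivAt_pi'.mpr fun i => ((hasFDerivAt_apply i y).pow 2).congr_fderiv ?_
    ext v
    simp [mulVec_diagonal]
  have hinj : Set.InjOn (fun (y : Fin m → ℝ) i => y i ^ 2) (interlacingBox β) := fun y hy z hz h =>
    funext fun i => (pow_left_inj₀ (hpos hy i).le (hpos hz i).le two_ne_zero).mp (congrFun h i)
  rw [← sq_image_interlacingBox hβ h0, lintegral_image_eq_lintegral_abs_det_fderiv_mul volume
    (measurableSet_interlacingBox β) (fun y _ => (hderiv y).hasFDerivWithinAt) hinj]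
  refine setLIntegral_congr_fun (measurableSet_interlacingBox β) fun y hy => ?_
  rw [ContinuousLinearMap.det, LinearMap.coe_toContinuousLinearMap, LinearMap.det_toLin',
    det_diagonal, abs_of_pos (Finset.prod_pos fun i _ => mul_pos two_pos (hpos hy i))]

lemma IsFrequencyLabelling.lintegral_corner_conj_sq {N m : ℕ} {a : ℕ → ℝ} {β : Fin (m + 1) → ℝ}
    {c : Fin (N + 1) → Fin (m + 1)} (h : IsFrequencyLabelling a β c) (ν : Measure (OG (N + 1)))
    [ν.IsMulLeftInvariant] [IsProbabilityMeasure ν] {ψ : Matrix (Fin N) (Fin N) ℝ → ENNReal}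
    (hψm : Measurable ψ) (hψ : IsConjInvariant ψ) :
    ∫⁻ k, ψ (corner (k.1 * blockSkew (N + 1) a * k.1ᵀ)) ∂ν =
      ∫⁻ y in interlacingBox β, ψ (blockSkew N (zeroExtend y)) *
        ENNReal.ofReal (Real.Gamma ((N + 1 : ℕ) / 2) / Real.Gamma ((N + 1 : ℕ) / 2 - m) *
          (nodalResidue (fun j => β j ^ 2) (fun i => y i ^ 2) 0 ^
              (((N + 1 : ℕ) : ℝ) / 2 - m - 1) *
            ((vdm fun i => y i ^ 2) / vdm fun j => β j ^ 2)) * ∏ i, 2 * y i) := by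
  rw [h.lintegral_corner_conj ν hψm hψ,
    setLIntegral_interlacingBox_sq h.strictMono.monotone h.zero_nonneg]
  refine setLIntegral_congr_fun (measurableSet_interlacingBox β) fun y hy => ?_
  have hpos := pos_of_mem_interlacingBox h.strictMono.monotone h.zero_nonneg hy
  simp only [Real.sqrt_sq (hpos _).le]
  rw [mul_left_comm, ← ENNReal.ofReal_mul (Finset.prod_nonneg fun i _ => by linarith [hpos i]),
    mul_comm (∏ i, 2 * y i)]

lemma card_fiber_eq_two {N : ℕ} {κ : Type*} [DecidableEq κ] {c : Fin N → κ} {j : κ} {i : ℕ}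
    (hi : 2 * i + 1 < N) (hc : ∀ r, c r = j ↔ r.val / 2 = i) :
    Fintype.card {r // c r = j} = 2 := by
  have hpair : (Finset.univ.filter fun r => c r = j) =
      {⟨2 * i, by omega⟩, ⟨2 * i + 1, hi⟩} := by
    ext r
    simp only [Finset.mem_filter_univ, hc, Finset.mem_insert, Finset.mem_singleton, Fin.ext_iff]
    omega
  rw [Fintype.card_subtype, hpair, Finset.card_pair (by simp [Fin.ext_iff])]

/-- The frequency labelling of the coordinates of `diag(a₀ J, …, aₘ J)`. -/
def evenLabel (m : ℕ) (r : Fin (2 * m + 1 + 1)) : Fin (m + 1) := ⟨r.val / 2, by omega⟩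

/-- The frequency labelling of the coordinates of `diag(y₀ J, …, yₘ₋₁ J, 0)`, the frequency `0` of
the last coordinate being labelled `0`. -/
def oddLabel (m : ℕ) (r : Fin (2 * m + 1)) : Fin (m + 1) :=
  if h : r.val < 2 * m then Fin.succ ⟨r.val / 2, by omega⟩ else 0

lemma isFrequencyLabelling_evenLabel {m : ℕ} {a : Fin (m + 1) → ℝ} (ha : StrictMono a)
    (h0 : 0 < a 0) : IsFrequencyLabelling (zeroExtend a) a (evenLabel m) where
  strictMono := ha
  zero_nonneg := h0.le
  apply_div_two r := zeroExtend_of_lt a (by omega)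
  surjective j := ⟨⟨2 * j.val, by omega⟩, by simp [evenLabel]⟩
  card_fiber_succ j := card_fiber_eq_two (i := j.val + 1) (by omega) fun r => by
    simp [evenLabel, Fin.ext_iff]
  lowest := .inr ⟨rfl, h0⟩

lemma strictMono_cons_zero {m : ℕ} {y : Fin m → ℝ} (hy : StrictMono y) (h0 : ∀ i, 0 < y i) :
    StrictMono (Fin.cons 0 y : Fin (m + 1) → ℝ) := by
  refine Fin.strictMono_iff_lt_succ.mpr fun i => ?_
  cases m with
  | zero => exact i.elim0
  | succ m =>
    cases i using Fin.cases with
    | zero => simpa using h0 0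
    | succ i => simpa [← Fin.succ_castSucc] using hy i.castSucc_lt_succ

lemma isFrequencyLabelling_oddLabel {m : ℕ} {y : Fin m → ℝ} (hy : StrictMono y)
    (h0 : ∀ i, 0 < y i) : IsFrequencyLabelling (zeroExtend y) (Fin.cons 0 y) (oddLabel m) where
  strictMono := strictMono_cons_zero hy h0
  zero_nonneg := le_rfl
  apply_div_two r := by
    by_cases h : r.val < 2 * m
    · rw [oddLabel, dif_pos h, Fin.cons_succ, zeroExtend_of_lt]
    · rw [oddLabel, dif_neg h, Fin.cons_zero, zeroExtend_of_le _ (by omega)]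
  surjective j := by
    cases j using Fin.cases with
    | zero => exact ⟨Fin.last _, by simp [oddLabel]⟩
    | succ j => exact ⟨⟨2 * j.val, by omega⟩, by simp [oddLabel]⟩
  card_fiber_succ j := card_fiber_eq_two (i := j.val) (by omega) fun r => by
    unfold oddLabel
    split_ifs with h
    · simp [Fin.ext_iff]
    · simp only [(Fin.succ_ne_zero j).symm, false_iff]
      omega
  lowest := .inl ⟨rfl, zeroExtend_of_le y le_rfl⟩

lemma lintegral_corner_conj_even {m : ℕ} (ν : Measure (OG (2 * m + 1 + 1)))
    [ν.IsMulLeftInvariant] [IsProbabilityMeasure ν] {a : Fin (m + 1) → ℝ} (ha : StrictMono a)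
    (h0 : 0 < a 0) {ψ : Matrix (Fin (2 * m + 1)) (Fin (2 * m + 1)) ℝ → ENNReal}
    (hψm : Measurable ψ) (hψ : IsConjInvariant ψ) :
    ∫⁻ k, ψ (corner (k.1 * blockSkew (2 * m + 1 + 1) (zeroExtend a) * k.1ᵀ)) ∂ν =
      ∫⁻ y in interlacingBox a, ψ (blockSkew (2 * m + 1) (zeroExtend y)) *
        ENNReal.ofReal ((m.factorial : ℝ) *
          (((vdm fun i => y i ^ 2) / vdm fun i => a i ^ 2) * ∏ i, 2 * y i)) := by
  have hhalf : ((2 * m + 1 + 1 : ℕ) : ℝ) / 2 = m + 1 := by push_cast; ring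
  rw [(isFrequencyLabelling_evenLabel ha h0).lintegral_corner_conj_sq ν hψm hψ]
  simp only [hhalf, Real.Gamma_nat_eq_factorial, add_sub_cancel_left, Real.Gamma_one, div_one,
    sub_self, Real.rpow_zero, one_mul, mul_assoc]

lemma lintegral_corner_conj_odd {m : ℕ} (ν : Measure (OG (2 * m + 1)))
    [ν.IsMulLeftInvariant] [IsProbabilityMeasure ν] {y : Fin m → ℝ} (hy : StrictMono y)
    (h0 : ∀ i, 0 < y i) {ψ : Matrix (Fin (2 * m)) (Fin (2 * m)) ℝ → ENNReal}
    (hψm : Measurable ψ) (hψ : IsConjInvariant ψ) :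
    ∫⁻ k, ψ (corner (k.1 * blockSkew (2 * m + 1) (zeroExtend y) * k.1ᵀ)) ∂ν =
      ∫⁻ x in interlacingBox (Fin.cons 0 y), ψ (blockSkew (2 * m) (zeroExtend x)) *
        ENNReal.ofReal (Real.Gamma (m + 1 / 2) / √Real.pi * 2 ^ m * (vdm fun i => x i ^ 2) /
          ((vdm fun i => y i ^ 2) * ∏ i, y i)) := by
  have hcons := strictMono_cons_zero hy h0
  have hhalf : ((2 * m + 1 : ℕ) : ℝ) / 2 = m + 1 / 2 := by push_cast; ring
  rw [(isFrequencyLabelling_oddLabel hy h0).lintegral_corner_conj_sq ν hψm hψ]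
  refine setLIntegral_congr_fun (measurableSet_interlacingBox _) fun x hx => ?_
  have hx0 := pos_of_mem_interlacingBox hcons.monotone le_rfl hx
  have hX : 0 < ∏ i, x i := Finset.prod_pos fun i _ => hx0 i
  have hY : 0 < ∏ i, y i := Finset.prod_pos fun i _ => h0 i
  have hres : nodalResidue (fun j => (Fin.cons 0 y : Fin (m + 1) → ℝ) j ^ 2) (fun i => x i ^ 2) 0 =
      ((∏ i, x i) / ∏ i, y i) ^ 2 := by
    simp [nodalResidue, nodalDeriv_eq_prod_succAbove, Finset.prod_neg, Finset.prod_pow, div_pow,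
      mul_div_mul_left]
  have hvdm : (vdm fun j => (Fin.cons 0 y : Fin (m + 1) → ℝ) j ^ 2) =
      (∏ i, y i) ^ 2 * vdm fun i => y i ^ 2 := by
    simp [vdm_succ, Function.comp_def, Finset.prod_pow]
  have hpow : (((∏ i, x i) / ∏ i, y i) ^ 2) ^ ((1 : ℝ) / 2 - 1) = (∏ i, y i) / ∏ i, x i := by
    rw [← Real.rpow_natCast_mul (by positivity), ← inv_div (∏ i, x i), ← Real.rpow_neg_one]
    norm_num
  simp only [hhalf, hres, hvdm, add_sub_cancel_left, Real.Gamma_one_half_eq, hpow,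
    Finset.prod_mul_distrib, Finset.prod_const, Finset.card_univ, Fintype.card_fin]
  congr 2
  field_simp

/-! ### Two successive compressions -/

lemma isMulRightInvariant_of_isHaarMeasure_of_isProbabilityMeasure {G : Type*} [Group G]
    [TopologicalSpace G] [IsTopologicalGroup G] [LocallyCompactSpace G] [MeasurableSpace G]
    [BorelSpace G] (ν : Measure G) [ν.IsHaarMeasure] [IsProbabilityMeasure ν] :
    ν.IsMulRightInvariant where
  map_mul_right_eq_self g := by
    have := Measure.isProbabilityMeasure_map (μ := ν) (measurable_mul_const g).aemeasurable
    exact Measure.isHaarMeasure_eq_of_isProbabilityMeasure _ _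

lemma exists_isHaarMeasure_isProbabilityMeasure (G : Type*) [Group G] [TopologicalSpace G]
    [IsTopologicalGroup G] [CompactSpace G] [MeasurableSpace G] [BorelSpace G] :
    ∃ ν : Measure G, ν.IsHaarMeasure ∧ IsProbabilityMeasure ν :=
  ⟨Measure.haarMeasure ⊤, inferInstance, ⟨Measure.haarMeasure_self⟩⟩

lemma OG.exists_corner_conj_eq {N : ℕ} (k : OG N) : ∃ K : OG (N + 1),
    ∀ X : Matrix (Fin (N + 1)) (Fin (N + 1)) ℝ,
      corner (K.1 * X * K.1ᵀ) = k.1 * corner X * k.1ᵀ := by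
  set K : Matrix (Fin (N + 1)) (Fin (N + 1)) ℝ :=
    reindex finSumFinEquiv finSumFinEquiv (fromBlocks k.1 0 0 (1 : Matrix (Fin 1) (Fin 1) ℝ))
  have hK : K * Kᵀ = 1 := by
    simp [K, submatrix_mul_equiv, fromBlocks_transpose, fromBlocks_multiply, OG.mul_transpose]
  have hlast (r : Fin N) : K r.castSucc (Fin.last N) = 0 := by
    simp [K, Fin.castSucc]
  have hcorner : corner K = k.1 := by
    ext r s
    simp [K, corner, Fin.castSucc]
  exact ⟨⟨K, OG.mem_of_mul_transpose hK⟩, fun X => by rw [corner_conj hlast, hcorner]⟩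

/-- The average of `φ` over the corners of the orthogonal conjugates of `A`. -/
def cornerAverage {N : ℕ} (ν : Measure (OG (N + 1))) (φ : Matrix (Fin N) (Fin N) ℝ → ENNReal)
    (A : Matrix (Fin (N + 1)) (Fin (N + 1)) ℝ) : ENNReal :=
  ∫⁻ k, φ (corner (k.1 * A * k.1ᵀ)) ∂ν

section CornerAverage

variable {N : ℕ}

lemma continuous_corner_conj :
    Continuous fun p : Matrix (Fin (N + 1)) (Fin (N + 1)) ℝ × OG (N + 1) =>
      corner (p.2.1 * p.1 * p.2.1ᵀ) := by
  have h : Continuous fun p : Matrix (Fin (N + 1)) (Fin (N + 1)) ℝ × OG (N + 1) => p.2.1 :=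
    continuous_subtype_val.comp continuous_snd
  exact ((h.mul continuous_fst).mul h.matrix_transpose).matrix_submatrix _ _

lemma measurable_corner_conj {Ω : Type*} [MeasurableSpace Ω]
    {X : Ω → Matrix (Fin (N + 1)) (Fin (N + 1)) ℝ} (hX : Measurable X) {k : Ω → OG (N + 1)}
    (hk : Measurable k) : Measurable fun ω => corner ((k ω).1 * X ω * (k ω).1ᵀ) :=
  Measurable.comp (g := fun p : Matrix (Fin (N + 1)) (Fin (N + 1)) ℝ × OG (N + 1) =>
    corner (p.2.1 * p.1 * p.2.1ᵀ)) (f := fun ω => (X ω, k ω))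
    continuous_corner_conj.measurable (hX.prodMk hk)

variable {φ : Matrix (Fin N) (Fin N) ℝ → ENNReal}

lemma measurable_cornerAverage (ν : Measure (OG (N + 1))) [SFinite ν] (hφ : Measurable φ) :
    Measurable (cornerAverage ν φ) :=
  (hφ.comp (measurable_corner_conj measurable_fst measurable_snd)).lintegral_prod_right'

lemma isConjInvariant_cornerAverage (ν : Measure (OG (N + 1))) [ν.IsMulRightInvariant] :
    IsConjInvariant (cornerAverage ν φ) := fun X _ g hg => by
  rw [cornerAverage, cornerAverage,
    ← lintegral_mul_right_eq_self (fun k : OG (N + 1) => φ (corner (k.1 * X * k.1ᵀ))) ⟨g, hg⟩]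
  exact lintegral_congr fun k => by simp [Matrix.mul_assoc]

lemma lintegral_corner_corner_conj (ν : Measure (OG (N + 1 + 1))) [ν.IsMulLeftInvariant]
    [SFinite ν] (ν' : Measure (OG (N + 1))) [IsProbabilityMeasure ν']
    (D : Matrix (Fin (N + 1 + 1)) (Fin (N + 1 + 1)) ℝ) (hφ : Measurable φ) :
    ∫⁻ k, φ (corner (corner (k.1 * D * k.1ᵀ))) ∂ν =
      ∫⁻ k : OG (N + 1 + 1), cornerAverage ν' φ (corner (k.1 * D * k.1ᵀ)) ∂ν := by
  have hleft (k' : OG (N + 1)) :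
      ∫⁻ k : OG (N + 1 + 1), φ (corner (k'.1 * corner (k.1 * D * k.1ᵀ) * k'.1ᵀ)) ∂ν =
        ∫⁻ k, φ (corner (corner (k.1 * D * k.1ᵀ))) ∂ν := by
    obtain ⟨K, hK⟩ := OG.exists_corner_conj_eq k'
    rw [← lintegral_mul_left_eq_self
      (fun k : OG (N + 1 + 1) => φ (corner (corner (k.1 * D * k.1ᵀ)))) K]
    refine lintegral_congr fun k => ?_
    rw [← hK]
    simp [Matrix.mul_assoc]
  have hmeas : Measurable fun p : OG (N + 1 + 1) × OG (N + 1) =>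
      φ (corner (p.2.1 * corner (p.1.1 * D * p.1.1ᵀ) * p.2.1ᵀ)) := by
    have hinner : Measurable fun p : OG (N + 1 + 1) × OG (N + 1) =>
        corner (p.1.1 * D * p.1.1ᵀ) :=
      measurable_corner_conj measurable_const measurable_fst
    exact hφ.comp (measurable_corner_conj hinner measurable_snd)
  simp only [cornerAverage]
  rw [lintegral_lintegral_swap hmeas.aemeasurable]
  simp [hleft]

end CornerAverage

lemma lintegral_corner_corner_conj_blockSkew {m : ℕ} (ν : Measure (OG (2 * m + 1 + 1)))
    [ν.IsMulLeftInvariant] [IsProbabilityMeasure ν] {a : Fin (m + 1) → ℝ} (ha : StrictMono a)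
    (h0 : 0 < a 0) {φ : Matrix (Fin (2 * m)) (Fin (2 * m)) ℝ → ENNReal} (hφm : Measurable φ)
    (hφ : IsConjInvariant φ) :
    ∫⁻ k, φ (corner (corner (k.1 * blockSkew (2 * m + 1 + 1) (zeroExtend a) * k.1ᵀ))) ∂ν =
      ∫⁻ y in interlacingBox a,
        (∫⁻ x in interlacingBox (Fin.cons 0 y), φ (blockSkew (2 * m) (zeroExtend x)) *
          ENNReal.ofReal (Real.Gamma (m + 1 / 2) / √Real.pi * 2 ^ m * (vdm fun i => x i ^ 2) /
            ((vdm fun i => y i ^ 2) * ∏ i, y i))) *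
        ENNReal.ofReal ((m.factorial : ℝ) *
          (((vdm fun i => y i ^ 2) / vdm fun i => a i ^ 2) * ∏ i, 2 * y i)) := by
  obtain ⟨ν', _, _⟩ := exists_isHaarMeasure_isProbabilityMeasure (OG (2 * m + 1))
  have := isMulRightInvariant_of_isHaarMeasure_of_isProbabilityMeasure ν'
  rw [lintegral_corner_corner_conj ν ν' _ hφm, lintegral_corner_conj_even ν ha h0
    (measurable_cornerAverage ν' hφm) (isConjInvariant_cornerAverage ν')]
  refine setLIntegral_congr_fun (measurableSet_interlacingBox a) fun y hy => ?_
  rw [cornerAverage, lintegral_corner_conj_odd ν' (strictMono_of_mem_interlacingBox ha.monotone hy)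
    (pos_of_mem_interlacingBox ha.monotone h0.le hy) hφm hφ]

/-! ### The volume of doubly interlacing spectra -/

/-- The matrix `M(x, a)` of the statement, with rows and columns indexed by `Fin (m + 1)`. -/
def hingeMatrix {m : ℕ} (x : Fin m → ℝ) (a : Fin (m + 1) → ℝ) :
    Matrix (Fin (m + 1)) (Fin (m + 1)) ℝ :=
  of fun b c => (Fin.cons 1 fun j => max 0 (a c - x j) : Fin (m + 1) → ℝ) b

/-- The lengths of the intersections of the intervals `[b j, b (j + 1)]` and `[a k, a (k + 1)]`. -/
def overlapMatrix {m : ℕ} (b a : Fin (m + 1) → ℝ) : Matrix (Fin m) (Fin m) ℝ :=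
  of fun j k => max 0 (min (a k.succ) (b j.succ) - max (a k.castSucc) (b j.castSucc))

section Overlap

variable {m : ℕ}

lemma det_hingeMatrix_eq_det_sub (x : Fin m → ℝ) (a : Fin (m + 1) → ℝ) :
    (hingeMatrix x a).det =
      (of fun j k : Fin m => max 0 (a k.succ - x j) - max 0 (a k.castSucc - x j)).det := by
  set B : Matrix (Fin (m + 1)) (Fin (m + 1)) ℝ := of fun i j =>
    (Fin.cons (hingeMatrix x a i 0)
      fun k => hingeMatrix x a i k.succ - hingeMatrix x a i k.castSucc : Fin (m + 1) → ℝ) j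
  have hB : (hingeMatrix x a).det = B.det :=
    det_eq_of_forall_col_eq_smul_add_pred (fun _ => 1) (by simp [B]) (by simp [B])
  have hrow (j : Fin m) : B 0 j.succ = 0 := by simp [B, hingeMatrix]
  have hcorner : B 0 0 = 1 := by simp [B, hingeMatrix]
  simp only [hB, det_succ_row_zero, Fin.sum_univ_succ, hrow, hcorner, mul_zero, zero_mul,
    Finset.sum_const_zero, add_zero, Fin.val_zero, pow_zero, one_mul]
  rfl

lemma hinge_sub_hinge {a a' x x' : ℝ} (ha : a ≤ a') (hx : x ≤ x') :
    max 0 (a' - x) - max 0 (a - x) =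
      max 0 (min a' x' - max a x) + (max 0 (a' - x') - max 0 (a - x')) := by
  simp only [max_def, min_def]
  split_ifs <;> linarith

lemma hinge_sub_hinge_of_le {a a' x x' : ℝ} (ha : a ≤ a') (hx' : a' ≤ x') :
    max 0 (a' - x) - max 0 (a - x) = max 0 (min a' x' - max a x) := by
  simp only [max_def, min_def]
  split_ifs <;> linarith

lemma snoc_succ_castSucc (x : Fin (m + 1) → ℝ) (t : ℝ) (i : Fin m) :
    (Fin.snoc x t : Fin (m + 2) → ℝ) i.castSucc.succ = x i.succ := by
  rw [Fin.succ_castSucc, Fin.snoc_castSucc]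

lemma snoc_succ_last (x : Fin (m + 1) → ℝ) (t : ℝ) :
    (Fin.snoc x t : Fin (m + 2) → ℝ) (Fin.last m).succ = t := by
  rw [Fin.succ_last, Fin.snoc_last]

lemma det_hingeMatrix_eq_det_overlapMatrix {x : Fin m → ℝ} {a : Fin (m + 1) → ℝ}
    (hx : Monotone x) (ha : Monotone a) :
    (hingeMatrix x a).det = (overlapMatrix (Fin.snoc x (a (Fin.last m))) a).det := by
  rw [det_hingeMatrix_eq_det_sub]
  cases m with
  | zero => simp
  | succ m =>
    rw [← det_submatrix_equiv_self Fin.revPerm,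
      ← det_submatrix_equiv_self Fin.revPerm (overlapMatrix _ a)]
    refine det_eq_of_forall_row_eq_smul_add_pred (fun _ => 1) (fun k => ?_) fun i k => ?_
    · simp only [submatrix_apply, Fin.revPerm_apply, Fin.rev_zero, of_apply, overlapMatrix,
        snoc_succ_last, Fin.snoc_castSucc]
      exact hinge_sub_hinge_of_le (ha (Fin.castSucc_lt_succ).le) (ha (Fin.le_last _))
    · simp only [submatrix_apply, Fin.revPerm_apply, Fin.rev_succ, Fin.rev_castSucc, of_apply,
        overlapMatrix, snoc_succ_castSucc, Fin.snoc_castSucc, one_mul]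
      exact hinge_sub_hinge (ha (Fin.castSucc_lt_succ).le) (hx (Fin.castSucc_lt_succ).le)

lemma overlapMatrix_nonneg (b a : Fin (m + 1) → ℝ) (j k : Fin m) : 0 ≤ overlapMatrix b a j k :=
  le_max_left _ _

lemma lt_of_overlapMatrix_ne_zero {b a : Fin (m + 1) → ℝ} {j k : Fin m}
    (h : overlapMatrix b a j k ≠ 0) : a k.castSucc < b j.succ ∧ b j.castSucc < a k.succ := by
  have := lt_of_not_ge fun h' => h (max_eq_left (sub_nonpos.mpr h'))
  simp only [max_lt_iff, lt_min_iff] at this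
  exact ⟨this.2.1, this.1.2⟩

lemma exists_lt_and_apply_lt_of_ne_one {σ : Equiv.Perm (Fin m)} (hσ : σ ≠ 1) :
    ∃ i j, i < j ∧ σ j < σ i := by
  by_contra! h
  have hmono : StrictMono σ := fun i j hij => (h i j hij).lt_of_ne (σ.injective.ne hij.ne)
  refine hσ (Equiv.ext fun i => ?_)
  exact DFunLike.congr_fun (Subsingleton.elim
    (hmono.orderIsoOfSurjective σ σ.surjective) (OrderIso.refl _)) i

/-- An inversion of `σ` would force an interval of one partition to meet an earlier and a later
interval of the other one in the wrong order, so only the identity contributes. -/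
lemma det_overlapMatrix {b a : Fin (m + 1) → ℝ} (hb : Monotone fun j : Fin m => b j.castSucc)
    (ha : Monotone a) : (overlapMatrix b a).det = ∏ j, overlapMatrix b a j j := by
  rw [det_apply, Finset.sum_eq_single 1 _ (by simp)]
  · simp
  intro σ _ hσ
  obtain ⟨i, j, hij, hσij⟩ := exists_lt_and_apply_lt_of_ne_one hσ
  suffices h : ∏ l, overlapMatrix b a (σ l) l = 0 by rw [h, smul_zero]
  by_contra hne
  rw [← Ne, Finset.prod_ne_zero_iff] at hne
  have hi := (lt_of_overlapMatrix_ne_zero (hne i (Finset.mem_univ _))).2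
  have hj := (lt_of_overlapMatrix_ne_zero (hne j (Finset.mem_univ _))).1
  have haij : a i.succ ≤ a j.castSucc := ha (Fin.succ_le_castSucc_iff.mpr hij)
  have hbij : b (σ j).succ ≤ b (σ i).castSucc :=
    hb (a := ⟨σ j + 1, by omega⟩) (Fin.mk_le_of_le_val hσij)
  linarith

lemma det_hingeMatrix {x : Fin m → ℝ} {a : Fin (m + 1) → ℝ} (hx : Monotone x) (ha : Monotone a) :
    (hingeMatrix x a).det = ∏ j, overlapMatrix (Fin.snoc x (a (Fin.last m))) a j j := by
  rw [det_hingeMatrix_eq_det_overlapMatrix hx ha, det_overlapMatrix (by simpa using hx) ha]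

lemma det_hingeMatrix_nonneg {x : Fin m → ℝ} {a : Fin (m + 1) → ℝ} (hx : Monotone x)
    (ha : Monotone a) : 0 ≤ (hingeMatrix x a).det := by
  rw [det_hingeMatrix hx ha]
  exact Finset.prod_nonneg fun j _ => overlapMatrix_nonneg _ _ _ _

lemma setOf_interlacing_eq_pi {x : Fin m → ℝ} (hx0 : ∀ i, 0 < x i) (a : Fin (m + 1) → ℝ) :
    {y : Fin m → ℝ | y ∈ interlacingBox a ∧ x ∈ interlacingBox (Fin.cons 0 y)} =
      Set.univ.pi fun i => Set.Ioo (max (a i.castSucc) (x i))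
        (min (a i.succ) ((Fin.snoc x (a (Fin.last m)) : Fin (m + 1) → ℝ) i.succ)) := by
  ext y
  simp only [interlacingBox, Set.mem_ofPred_eq, Set.mem_pi, Set.mem_univ, true_implies,
    Set.mem_Ioo, max_lt_iff, lt_min_iff, Fin.cons_succ, forall_and]
  cases m with
  | zero => simp
  | succ m =>
    have hleft : (∀ i, (Fin.cons 0 y : Fin (m + 2) → ℝ) i.castSucc < x i) ↔
        ∀ i : Fin m, y i.castSucc < x i.succ := by
      rw [Fin.forall_fin_succ]
      simp [hx0]
    have hright (h : ∀ i, y i < a i.succ) :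
        (∀ i, y i < (Fin.snoc x (a (Fin.last (m + 1))) : Fin (m + 2) → ℝ) i.succ) ↔
          ∀ i : Fin m, y i.castSucc < x i.succ := by
      rw [Fin.forall_fin_succ']
      simp only [snoc_succ_castSucc, snoc_succ_last, and_iff_left_iff_imp]
      exact fun _ => h (Fin.last m)
    rw [hleft]
    grind

lemma volume_setOf_interlacing {x : Fin m → ℝ} (hx : Monotone x) (hx0 : ∀ i, 0 < x i)
    {a : Fin (m + 1) → ℝ} (ha : Monotone a) :
    volume {y : Fin m → ℝ | y ∈ interlacingBox a ∧ x ∈ interlacingBox (Fin.cons 0 y)} =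
      ENNReal.ofReal (hingeMatrix x a).det := by
  rw [det_hingeMatrix hx ha, ENNReal.ofReal_prod_of_nonneg fun i _ => overlapMatrix_nonneg _ _ _ _,
    setOf_interlacing_eq_pi hx0, Real.volume_pi_Ioo]
  simp [overlapMatrix, ENNReal.ofReal_max]

end Overlap

lemma factorial_mul_four_pow_mul_Gamma (m : ℕ) :
    (m.factorial : ℝ) * 4 ^ m * (Real.Gamma (m + 1 / 2) / √Real.pi) = (2 * m).factorial := by
  have h := Real.Gamma_mul_Gamma_add_half (m + 1 / 2)
  have hexp : (2 : ℝ) ^ (1 - 2 * ((m : ℝ) + 1 / 2)) = (4 ^ m)⁻¹ := by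
    rw [show (1 : ℝ) - 2 * (m + 1 / 2) = -((2 * m : ℕ) : ℝ) by push_cast; ring,
      Real.rpow_neg zero_le_two, Real.rpow_natCast, pow_mul]
    norm_num
  have hdouble : (2 : ℝ) * (m + 1 / 2) = (2 * m : ℕ) + 1 := by push_cast; ring
  rw [add_assoc, add_halves, Real.Gamma_nat_eq_factorial, hexp, hdouble,
    Real.Gamma_nat_eq_factorial] at h
  have := Real.sqrt_pos.mpr Real.pi_pos
  field_simp at h ⊢
  linarith

/-! ### Integrating out the intermediate spectrum -/

/-- The open chamber `0 < x₁ < ⋯ < x_m` of increasingly ordered spectra. -/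
def posChamber (m : ℕ) : Set (Fin m → ℝ) := {x | StrictMono x} ∩ posOrthant (Fin m)

section PosChamber

variable {m : ℕ}

lemma measurableSet_posChamber (m : ℕ) : MeasurableSet (posChamber m) := by
  refine MeasurableSet.inter ?_ (measurableSet_posOrthant _)
  have : {x : Fin m → ℝ | StrictMono x} = ⋂ i, ⋂ j, ⋂ _ : i < j, {x | x i < x j} := by
    ext x
    simp [StrictMono]
  rw [this]
  exact .iInter fun i => .iInter fun j => .iInter fun _ =>
    measurableSet_lt (measurable_pi_apply i) (measurable_pi_apply j)

lemma mem_posChamber_of_mem_interlacingBox {a : Fin (m + 1) → ℝ} {y : Fin m → ℝ} (ha : Monotone a)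
    (h0 : 0 ≤ a 0) (hy : y ∈ interlacingBox a) : y ∈ posChamber m :=
  ⟨strictMono_of_mem_interlacingBox ha hy, pos_of_mem_interlacingBox ha h0 hy⟩

lemma mem_posChamber_of_mem_interlacingBox_cons {x y : Fin m → ℝ} (hy : y ∈ posChamber m)
    (hx : x ∈ interlacingBox (Fin.cons 0 y)) : x ∈ posChamber m :=
  mem_posChamber_of_mem_interlacingBox (strictMono_cons_zero hy.1 hy.2).monotone le_rfl hx

lemma vdm_sq_pos {x : Fin m → ℝ} (hx : x ∈ posChamber m) : 0 < vdm fun i => x i ^ 2 :=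
  vdm_pos fun i _ hij => pow_lt_pow_left₀ (hx.1 hij) (hx.2 i).le two_ne_zero

lemma measurable_vdm_sq : Measurable fun x : Fin m → ℝ => vdm fun i => x i ^ 2 := by
  unfold vdm
  fun_prop

lemma measurable_det_hingeMatrix (a : Fin (m + 1) → ℝ) :
    Measurable fun x : Fin m → ℝ => (hingeMatrix x a).det := by
  simp only [det_apply]
  refine Finset.measurable_fun_sum _ fun σ _ => .const_smul
    (Finset.measurable_fun_prod _ fun i _ => ?_) _
  cases σ i using Fin.cases <;> simp only [hingeMatrix, of_apply, Fin.cons_zero,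
    Fin.cons_succ] <;> fun_prop

lemma measurableSet_mem_interlacingBox_cons (m : ℕ) :
    MeasurableSet {p : (Fin m → ℝ) × (Fin m → ℝ) | p.2 ∈ interlacingBox (Fin.cons 0 p.1)} := by
  have hcons (i : Fin (m + 1)) :
      Measurable fun p : (Fin m → ℝ) × (Fin m → ℝ) => (Fin.cons 0 p.1 : Fin (m + 1) → ℝ) i := by
    cases i using Fin.cases <;> simp only [Fin.cons_zero, Fin.cons_succ] <;> fun_prop
  have hinter : {p : (Fin m → ℝ) × (Fin m → ℝ) | p.2 ∈ interlacingBox (Fin.cons 0 p.1)} =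
      ⋂ i, {p | (Fin.cons 0 p.1 : Fin (m + 1) → ℝ) i.castSucc < p.2 i} ∩
        {p | p.2 i < (Fin.cons 0 p.1 : Fin (m + 1) → ℝ) i.succ} := by
    ext p
    simp [interlacingBox]
  rw [hinter]
  exact .iInter fun i => (measurableSet_lt (hcons _) (by fun_prop)).inter
    (measurableSet_lt (by fun_prop) (hcons _))

lemma lintegral_interlacingBox_lintegral_interlacingBox_cons {a : Fin (m + 1) → ℝ}
    (ha : Monotone a) (h0 : 0 ≤ a 0) {F : (Fin m → ℝ) → ENNReal} (hF : Measurable F) :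
    ∫⁻ y in interlacingBox a, ∫⁻ x in interlacingBox (Fin.cons 0 y), F x =
      ∫⁻ x in posChamber m, F x * ENNReal.ofReal (hingeMatrix x a).det := by
  set P : Set ((Fin m → ℝ) × (Fin m → ℝ)) := {p | p.2 ∈ interlacingBox (Fin.cons 0 p.1)}
  have hP : MeasurableSet P := measurableSet_mem_interlacingBox_cons m
  have hslice (x : Fin m → ℝ) : MeasurableSet {y | (y, x) ∈ P} :=
    hP.preimage (measurable_id.prodMk measurable_const)
  calc ∫⁻ y in interlacingBox a, ∫⁻ x in interlacingBox (Fin.cons 0 y), F x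
      = ∫⁻ y in interlacingBox a, ∫⁻ x, P.indicator (fun p => F p.2) (y, x) :=
        lintegral_congr fun y => (lintegral_indicator (measurableSet_interlacingBox _) _).symm
    _ = ∫⁻ x, ∫⁻ y in interlacingBox a, {y | (y, x) ∈ P}.indicator (fun _ => F x) y :=
        lintegral_lintegral_swap ((hF.comp measurable_snd).indicator hP).aemeasurable
    _ = ∫⁻ x, F x * volume {y | y ∈ interlacingBox a ∧ (y, x) ∈ P} := by
        refine lintegral_congr fun x => ?_
        rw [lintegral_indicator_const (hslice x), Measure.restrict_apply (hslice x),
          Set.inter_comm]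
        rfl
    _ = ∫⁻ x, (posChamber m).indicator
          (fun x => F x * ENNReal.ofReal (hingeMatrix x a).det) x := by
        refine lintegral_congr fun x => ?_
        by_cases hx : x ∈ posChamber m
        · rw [Set.indicator_of_mem hx, ← volume_setOf_interlacing hx.1.monotone hx.2 ha]
          rfl
        · have hempty : {y | y ∈ interlacingBox a ∧ (y, x) ∈ P} = ∅ :=
            Set.eq_empty_of_forall_notMem fun y hy => hx <|
              mem_posChamber_of_mem_interlacingBox_cons
                (mem_posChamber_of_mem_interlacingBox ha h0 hy.1) hy.2
          rw [hempty, measure_empty, mul_zero, Set.indicator_of_notMem hx]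
    _ = _ := lintegral_indicator (measurableSet_posChamber m) _

lemma corner_density_mul_corner_density {a : Fin (m + 1) → ℝ} {x y : Fin m → ℝ}
    (hy : y ∈ posChamber m) (hx : x ∈ posChamber m) :
    ENNReal.ofReal (Real.Gamma (m + 1 / 2) / √Real.pi * 2 ^ m * (vdm fun i => x i ^ 2) /
        ((vdm fun i => y i ^ 2) * ∏ i, y i)) *
      ENNReal.ofReal ((m.factorial : ℝ) *
        (((vdm fun i => y i ^ 2) / vdm fun i => a i ^ 2) * ∏ i, 2 * y i)) =
    ENNReal.ofReal (((2 * m).factorial : ℝ) *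
      ((vdm fun i => x i ^ 2) / vdm fun i => a i ^ 2)) := by
  have hY : 0 < ∏ i, y i := Finset.prod_pos fun i _ => hy.2 i
  have hvy := vdm_sq_pos hy
  have hvx := vdm_sq_pos hx
  have : 0 < Real.Gamma ((m : ℝ) + 1 / 2) := Real.Gamma_pos_of_pos (by positivity)
  have h4 : (4 : ℝ) ^ m = 2 ^ m * 2 ^ m := by rw [← mul_pow]; norm_num
  rw [← ENNReal.ofReal_mul (by positivity), ← factorial_mul_four_pow_mul_Gamma, h4,
    Finset.prod_mul_distrib, Finset.prod_const, Finset.card_univ, Fintype.card_fin]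
  congr 1
  field_simp

lemma lintegral_corner_corner_conj_eq_setLIntegral_posChamber
    (ν : Measure (OG (2 * m + 1 + 1))) [ν.IsMulLeftInvariant] [IsProbabilityMeasure ν]
    {a : Fin (m + 1) → ℝ} (ha : a ∈ posChamber (m + 1))
    {φ : Matrix (Fin (2 * m)) (Fin (2 * m)) ℝ → ENNReal} (hφm : Measurable φ)
    (hφ : IsConjInvariant φ) :
    ∫⁻ k, φ (corner (corner (k.1 * blockSkew (2 * m + 1 + 1) (zeroExtend a) * k.1ᵀ))) ∂ν =
      ∫⁻ x in posChamber m, φ (blockSkew (2 * m) (zeroExtend x)) *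
        ENNReal.ofReal (((2 * m).factorial : ℝ) *
          ((vdm fun i => x i ^ 2) / vdm fun i => a i ^ 2) * (hingeMatrix x a).det) := by
  have hmono := ha.1.monotone
  have h0 := (ha.2 0).le
  have hva := vdm_sq_pos ha
  have hmeas : Measurable fun x : Fin m → ℝ => φ (blockSkew (2 * m) (zeroExtend x)) *
      ENNReal.ofReal (((2 * m).factorial : ℝ) *
        ((vdm fun i => x i ^ 2) / vdm fun i => a i ^ 2)) :=
    (hφm.comp (measurable_blockSkew_zeroExtend _ _)).mul
      ((measurable_vdm_sq.div_const _).const_mul _).ennreal_ofReal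
  rw [lintegral_corner_corner_conj_blockSkew ν ha.1 (ha.2 0) hφm hφ]
  calc _ = ∫⁻ y in interlacingBox a, ∫⁻ x in interlacingBox (Fin.cons 0 y),
        φ (blockSkew (2 * m) (zeroExtend x)) * ENNReal.ofReal (((2 * m).factorial : ℝ) *
          ((vdm fun i => x i ^ 2) / vdm fun i => a i ^ 2)) := by
        refine setLIntegral_congr_fun (measurableSet_interlacingBox a) fun y hy => ?_
        have hy' := mem_posChamber_of_mem_interlacingBox hmono h0 hy
        rw [← lintegral_mul_const' _ _ ENNReal.ofReal_ne_top]
        refine setLIntegral_congr_fun (measurableSet_interlacingBox _) fun x hx => ?_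
        simp only [mul_assoc (φ _), corner_density_mul_corner_density hy'
          (mem_posChamber_of_mem_interlacingBox_cons hy' hx)]
    _ = _ := by
        rw [lintegral_interlacingBox_lintegral_interlacingBox_cons hmono h0 hmeas]
        refine setLIntegral_congr_fun (measurableSet_posChamber m) fun x hx => ?_
        have := vdm_sq_pos hx
        rw [mul_assoc, ← ENNReal.ofReal_mul (by positivity)]

end PosChamber

/-! ### Removing the ordering -/

section PermConj

lemma permMatrix_mul_mul_transpose {ι R : Type*} [Fintype ι] [DecidableEq ι] [NonAssocSemiring R]
    (σ : Equiv.Perm ι) (A : Matrix ι ι R) :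
    σ.permMatrix R * A * (σ.permMatrix R)ᵀ = A.submatrix σ σ := by
  rw [transpose_permMatrix, PEquiv.toMatrix_toPEquiv_mul, PEquiv.mul_toMatrix_toPEquiv,
    submatrix_submatrix]
  rfl

lemma permMatrix_mem_orthogonalGroup {N : ℕ} (σ : Equiv.Perm (Fin N)) :
    σ.permMatrix ℝ ∈ orthogonalGroup (Fin N) ℝ := by
  apply OG.mem_of_mul_transpose
  rw [transpose_permMatrix, ← permMatrix_mul, inv_mul_cancel, permMatrix_one]

/-- The permutation of `Fin (2 * m)` that permutes the pairs `{2 * j, 2 * j + 1}` by `σ`. -/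
def pairPerm {m : ℕ} (σ : Equiv.Perm (Fin m)) : Equiv.Perm (Fin (2 * m)) :=
  (((finCongr (mul_comm 2 m)).trans finProdFinEquiv.symm).symm).permCongr (σ.prodCongr (.refl _))

variable {m : ℕ}

lemma val_pairPerm (σ : Equiv.Perm (Fin m)) (i : Fin (2 * m)) :
    (pairPerm σ i).val = i.val % 2 + 2 * (σ ⟨i.val / 2, by omega⟩).val := by
  simp [pairPerm, Equiv.permCongr_apply, Fin.divNat, Fin.modNat]

lemma pairPerm_div_two (σ : Equiv.Perm (Fin m)) (i : Fin (2 * m)) :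
    (pairPerm σ i).val / 2 = σ ⟨i.val / 2, by omega⟩ := by
  have := val_pairPerm σ i
  omega

lemma pairPerm_mod_two (σ : Equiv.Perm (Fin m)) (i : Fin (2 * m)) :
    (pairPerm σ i).val % 2 = i.val % 2 := by
  have := val_pairPerm σ i
  omega

lemma blockSkew_zeroExtend_comp_perm (σ : Equiv.Perm (Fin m)) (x : Fin m → ℝ) :
    blockSkew (2 * m) (zeroExtend (x ∘ σ)) =
      (blockSkew (2 * m) (zeroExtend x)).submatrix (pairPerm σ) (pairPerm σ) := by
  ext i j
  have hi : i.val / 2 < m := by omega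
  have hj : j.val / 2 < m := by omega
  have hij : (σ ⟨i.val / 2, hi⟩).val = σ ⟨j.val / 2, hj⟩ ↔ i.val / 2 = j.val / 2 := by
    rw [← Fin.ext_iff, σ.injective.eq_iff, Fin.mk.injEq]
  simp only [blockSkew, of_apply, submatrix_apply, pairPerm_div_two, pairPerm_mod_two, hij,
    zeroExtend_of_lt _ hi, zeroExtend_of_lt _ (Fin.is_lt _), Function.comp_apply]

lemma exists_blockSkew_zeroExtend_comp_perm_eq_conj (σ : Equiv.Perm (Fin m)) (x : Fin m → ℝ) :
    ∃ g ∈ orthogonalGroup (Fin (2 * m)) ℝ, blockSkew (2 * m) (zeroExtend (x ∘ σ)) =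
      g * blockSkew (2 * m) (zeroExtend x) * gᵀ :=
  ⟨_, permMatrix_mem_orthogonalGroup (pairPerm σ), by
    rw [permMatrix_mul_mul_transpose, blockSkew_zeroExtend_comp_perm]⟩

lemma IsConjInvariant.blockSkew_zeroExtend_comp_perm
    {φ : Matrix (Fin (2 * m)) (Fin (2 * m)) ℝ → ENNReal} (hφ : IsConjInvariant φ)
    (σ : Equiv.Perm (Fin m)) (x : Fin m → ℝ) :
    φ (blockSkew (2 * m) (zeroExtend (x ∘ σ))) = φ (blockSkew (2 * m) (zeroExtend x)) := by
  obtain ⟨g, hg, h⟩ := exists_blockSkew_zeroExtend_comp_perm_eq_conj σ x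
  rw [h, hφ _ (transpose_blockSkew _ _) g hg]

lemma lintegral_conj_blockSkew_zeroExtend_comp_perm (ν : Measure (OG (2 * m)))
    [ν.IsMulRightInvariant] (F : Matrix (Fin (2 * m)) (Fin (2 * m)) ℝ → ENNReal)
    (σ : Equiv.Perm (Fin m)) (a : Fin m → ℝ) :
    ∫⁻ k, F (k.1 * blockSkew (2 * m) (zeroExtend (a ∘ σ)) * k.1ᵀ) ∂ν =
      ∫⁻ k, F (k.1 * blockSkew (2 * m) (zeroExtend a) * k.1ᵀ) ∂ν := by
  obtain ⟨g, hg, h⟩ := exists_blockSkew_zeroExtend_comp_perm_eq_conj σ a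
  rw [← lintegral_mul_right_eq_self
    (fun k : OG (2 * m) => F (k.1 * blockSkew (2 * m) (zeroExtend a) * k.1ᵀ)) ⟨g, hg⟩]
  exact lintegral_congr fun k => by simp [h, Matrix.mul_assoc]

end PermConj

section ProjectionDensity

variable {m : ℕ}

lemma vdm_comp_perm {R : Type*} [CommRing R] (σ : Equiv.Perm (Fin m)) (x : Fin m → R) :
    vdm (x ∘ σ) = (Equiv.Perm.sign σ : R) * vdm x := by
  rw [vdm_eq_det_vandermonde, vdm_eq_det_vandermonde, ← det_permute]
  rfl

lemma det_hingeMatrix_comp_perm_left (σ : Equiv.Perm (Fin m)) (x : Fin m → ℝ)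
    (a : Fin (m + 1) → ℝ) :
    (hingeMatrix (x ∘ σ) a).det = (Equiv.Perm.sign σ : ℝ) * (hingeMatrix x a).det := by
  rw [det_hingeMatrix_eq_det_sub, det_hingeMatrix_eq_det_sub, ← det_permute]
  rfl

lemma det_hingeMatrix_comp_perm_right (σ : Equiv.Perm (Fin (m + 1))) (x : Fin m → ℝ)
    (a : Fin (m + 1) → ℝ) :
    (hingeMatrix x (a ∘ σ)).det = (Equiv.Perm.sign σ : ℝ) * (hingeMatrix x a).det := by
  rw [← det_permute']
  rfl

/-- The density `p(x)` of the statement, with `n = m + 1`. -/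
def projectionDensity (x : Fin m → ℝ) (a : Fin (m + 1) → ℝ) : ℝ :=
  ((2 * m).factorial : ℝ) / (m.factorial : ℝ) *
    ((vdm fun i => x i ^ 2) / vdm fun i => a i ^ 2) * (hingeMatrix x a).det

lemma projectionDensity_comp_perm_left (σ : Equiv.Perm (Fin m)) (x : Fin m → ℝ)
    (a : Fin (m + 1) → ℝ) : projectionDensity (x ∘ σ) a = projectionDensity x a := by
  have hvdm : (vdm fun i => (x ∘ σ) i ^ 2) = Equiv.Perm.sign σ * vdm fun i => x i ^ 2 :=
    vdm_comp_perm σ fun i => x i ^ 2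
  rw [projectionDensity, projectionDensity, det_hingeMatrix_comp_perm_left, hvdm]
  rcases Int.units_eq_one_or (Equiv.Perm.sign σ) with h | h <;> simp [h, neg_div]

lemma projectionDensity_comp_perm_right (σ : Equiv.Perm (Fin (m + 1))) (x : Fin m → ℝ)
    (a : Fin (m + 1) → ℝ) : projectionDensity x (a ∘ σ) = projectionDensity x a := by
  have hvdm : (vdm fun i => (a ∘ σ) i ^ 2) = Equiv.Perm.sign σ * vdm fun i => a i ^ 2 :=
    vdm_comp_perm σ fun i => a i ^ 2
  rw [projectionDensity, projectionDensity, det_hingeMatrix_comp_perm_right, hvdm]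
  rcases Int.units_eq_one_or (Equiv.Perm.sign σ) with h | h <;> simp [h, div_neg]

lemma projectionDensity_nonneg {x : Fin m → ℝ} {a : Fin (m + 1) → ℝ} (hx : x ∈ posOrthant (Fin m))
    (ha : a ∈ posOrthant (Fin (m + 1))) : 0 ≤ projectionDensity x a := by
  rw [← projectionDensity_comp_perm_left (Tuple.sort x),
    ← projectionDensity_comp_perm_right (Tuple.sort a)]
  have hxm := Tuple.monotone_sort x
  have ham := Tuple.monotone_sort a
  have hvx := vdm_nonneg fun i j hij => pow_le_pow_left₀ (hx (Tuple.sort x i)).le (hxm hij) 2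
  have hva := vdm_nonneg fun i j hij => pow_le_pow_left₀ (ha (Tuple.sort a i)).le (ham hij) 2
  exact mul_nonneg (mul_nonneg (by positivity) (div_nonneg hvx hva))
    (det_hingeMatrix_nonneg hxm ham)

lemma measurable_projectionDensity (a : Fin (m + 1) → ℝ) :
    Measurable fun x : Fin m → ℝ => projectionDensity x a :=
  ((measurable_vdm_sq.div_const _).const_mul _).mul (measurable_det_hingeMatrix a)

end ProjectionDensity

section Symmetrization

lemma ae_injective {ι : Type*} [Fintype ι] : ∀ᵐ x : ι → ℝ, Function.Injective x := by
  have hne (i j : ι) (hij : i ≠ j) : ∀ᵐ x : ι → ℝ, x i ≠ x j := by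
    classical
    set diff : (ι → ℝ) →ₗ[ℝ] ℝ :=
      LinearMap.proj (R := ℝ) (φ := fun _ => ℝ) i - LinearMap.proj j
    have hproper : LinearMap.ker diff ≠ ⊤ := fun h => by
      have hmem : Pi.single i 1 ∈ LinearMap.ker diff := h ▸ Submodule.mem_top
      simp [diff, hij] at hmem
    rw [ae_iff]
    convert Measure.addHaar_submodule volume _ hproper using 2
    ext x
    simp [diff, sub_eq_zero]
  simp only [← ae_all_iff] at hne
  filter_upwards [hne] with x hx i j h
  exact not_not.mp fun hij => hx i j hij h

variable {m : ℕ}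

lemma sum_indicator_strictMono_comp_perm {M : Type*} [AddCommMonoid M] {f : (Fin m → ℝ) → M}
    (hf : ∀ (σ : Equiv.Perm (Fin m)) x, f (x ∘ σ) = f x) {x : Fin m → ℝ}
    (hx : Function.Injective x) :
    ∑ σ : Equiv.Perm (Fin m), {x | StrictMono x}.indicator f (x ∘ σ) = f x := by
  have hsort : StrictMono (x ∘ Tuple.sort x) :=
    (Tuple.monotone_sort x).strictMono_of_injective (hx.comp (Equiv.injective _))
  rw [Finset.sum_eq_single (Tuple.sort x) (fun τ _ hτ => Set.indicator_of_notMem ?_ _) (by simp),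
    Set.indicator_of_mem (show x ∘ Tuple.sort x ∈ {x | StrictMono x} from hsort), hf]
  intro (hmono : StrictMono (x ∘ τ))
  have heq := Tuple.unique_monotone hmono.monotone (Tuple.monotone_sort x)
  exact hτ (Equiv.ext fun i => hx (congrFun heq i))

lemma lintegral_comp_perm {ι : Type*} [Fintype ι] (f : (ι → ℝ) → ENNReal) (σ : Equiv.Perm ι) :
    ∫⁻ x : ι → ℝ, f (x ∘ σ) = ∫⁻ x, f x := by
  rw [← (volume_measurePreserving_piCongrLeft (fun _ : ι => ℝ) σ.symm).lintegral_comp_emb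
    (MeasurableEquiv.measurableEmbedding _) f]
  refine lintegral_congr fun x => congrArg f (funext fun i => ?_)
  have h := MeasurableEquiv.piCongrLeft_apply_apply (β := fun _ : ι => ℝ) σ.symm x (σ i)
  rw [Equiv.symm_apply_apply] at h
  exact h.symm

lemma setLIntegral_posOrthant_eq_factorial_mul {f : (Fin m → ℝ) → ENNReal} (hfm : Measurable f)
    (hf : ∀ (σ : Equiv.Perm (Fin m)) x, f (x ∘ σ) = f x) :
    ∫⁻ x in posOrthant (Fin m), f x = m.factorial * ∫⁻ x in posChamber m, f x := by
  set g := (posOrthant (Fin m)).indicator f with hg_def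
  have hg (σ : Equiv.Perm (Fin m)) (x : Fin m → ℝ) : g (x ∘ σ) = g x := by
    have hmem : x ∘ σ ∈ posOrthant (Fin m) ↔ x ∈ posOrthant (Fin m) :=
      σ.forall_congr fun _ => Iff.rfl
    by_cases hx : x ∈ posOrthant (Fin m)
    · rw [hg_def, Set.indicator_of_mem hx, Set.indicator_of_mem (hmem.mpr hx), hf]
    · rw [hg_def, Set.indicator_of_notMem hx, Set.indicator_of_notMem (mt hmem.mp hx)]
  have hind : {x | StrictMono x}.indicator g = (posChamber m).indicator f :=
    Set.indicator_indicator _ _ _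
  have hmeas := hfm.indicator (measurableSet_posChamber m)
  calc ∫⁻ x in posOrthant (Fin m), f x
      = ∫⁻ x, g x := (lintegral_indicator (measurableSet_posOrthant _) f).symm
    _ = ∫⁻ x, ∑ σ : Equiv.Perm (Fin m), (posChamber m).indicator f (x ∘ σ) := by
        refine lintegral_congr_ae ?_
        filter_upwards [ae_injective] with x hx
        rw [← hind, sum_indicator_strictMono_comp_perm hg hx]
    _ = ∑ σ : Equiv.Perm (Fin m), ∫⁻ x, (posChamber m).indicator f (x ∘ σ) :=
        lintegral_finsetSum _ fun σ _ => hmeas.comp (by fun_prop)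
    _ = m.factorial * ∫⁻ x in posChamber m, f x := by
        simp only [lintegral_comp_perm, lintegral_indicator (measurableSet_posChamber m),
          Finset.sum_const, Finset.card_univ, Fintype.card_perm, Fintype.card_fin, nsmul_eq_mul]

end Symmetrization

/-! ### The law of the double corner -/

section CornerCornerLaw

variable {m : ℕ}

lemma lintegral_corner_corner_conj_eq_setLIntegral_posOrthant (ν : Measure (OG (2 * m + 1 + 1)))
    [ν.IsHaarMeasure] [IsProbabilityMeasure ν] {a : Fin (m + 1) → ℝ}
    (ha : a ∈ posOrthant (Fin (m + 1))) (hinj : Function.Injective a)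
    {φ : Matrix (Fin (2 * m)) (Fin (2 * m)) ℝ → ENNReal} (hφm : Measurable φ)
    (hφ : IsConjInvariant φ) :
    ∫⁻ k, φ (corner (corner (k.1 * blockSkew (2 * m + 1 + 1) (zeroExtend a) * k.1ᵀ))) ∂ν =
      ∫⁻ x in posOrthant (Fin m), φ (blockSkew (2 * m) (zeroExtend x)) *
        ENNReal.ofReal (projectionDensity x a) := by
  have := isMulRightInvariant_of_isHaarMeasure_of_isProbabilityMeasure ν
  set σ := Tuple.sort a
  have hsort : a ∘ σ ∈ posChamber (m + 1) :=
    ⟨(Tuple.monotone_sort a).strictMono_of_injective (hinj.comp σ.injective), fun i => ha (σ i)⟩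
  have hdens (x : Fin m → ℝ) : ENNReal.ofReal (((2 * m).factorial : ℝ) *
        ((vdm fun i => x i ^ 2) / vdm fun i => (a ∘ σ) i ^ 2) * (hingeMatrix x (a ∘ σ)).det) =
      m.factorial * ENNReal.ofReal (projectionDensity x a) := by
    have : (m.factorial : ℝ) ≠ 0 := mod_cast m.factorial_ne_zero
    rw [← projectionDensity_comp_perm_right σ, ← ENNReal.ofReal_natCast,
      ← ENNReal.ofReal_mul (by positivity), projectionDensity]
    congr 1
    field_simp
  calc ∫⁻ k, φ (corner (corner (k.1 * blockSkew (2 * m + 1 + 1) (zeroExtend a) * k.1ᵀ))) ∂ν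
      = ∫⁻ k, φ (corner (corner
          (k.1 * blockSkew (2 * m + 1 + 1) (zeroExtend (a ∘ σ)) * k.1ᵀ))) ∂ν :=
        (lintegral_conj_blockSkew_zeroExtend_comp_perm (m := m + 1) ν
          (fun X => φ (corner (corner X))) σ a).symm
    _ = ∫⁻ x in posChamber m, m.factorial * (φ (blockSkew (2 * m) (zeroExtend x)) *
          ENNReal.ofReal (projectionDensity x a)) := by
        rw [lintegral_corner_corner_conj_eq_setLIntegral_posChamber ν hsort hφm hφ]
        simp only [hdens, mul_left_comm]
    _ = _ := by
        rw [lintegral_const_mul' _ _ (ENNReal.natCast_ne_top _),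
          setLIntegral_posOrthant_eq_factorial_mul]
        · exact (hφm.comp (measurable_blockSkew_zeroExtend _ _)).mul
            (measurable_projectionDensity a).ennreal_ofReal
        · intro τ x
          rw [hφ.blockSkew_zeroExtend_comp_perm, projectionDensity_comp_perm_left]

lemma measurable_corner_corner_conj {N : ℕ} (A : Matrix (Fin (N + 1 + 1)) (Fin (N + 1 + 1)) ℝ) :
    Measurable fun k : OG (N + 1 + 1) => corner (corner (k.1 * A * k.1ᵀ)) := by
  have hcorner : Measurable (corner (N := N)) :=
    measurable_pi_lambda _ fun i => measurable_pi_lambda _ fun j =>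
      (measurable_pi_apply j.castSucc).comp (measurable_pi_apply i.castSucc)
  exact hcorner.comp (measurable_corner_conj measurable_const measurable_id)

lemma map_corner_corner_conj (ν : Measure (OG (2 * m + 1 + 1)))
    [ν.IsHaarMeasure] [IsProbabilityMeasure ν] {a : Fin (m + 1) → ℝ}
    (ha : a ∈ posOrthant (Fin (m + 1))) (hinj : Function.Injective a)
    {Ω : Type*} [MeasurableSpace Ω] {φ : Matrix (Fin (2 * m)) (Fin (2 * m)) ℝ → Ω}
    (hφm : Measurable φ)
    (hφ : ∀ X, Xᵀ = -X → ∀ k ∈ orthogonalGroup (Fin (2 * m)) ℝ, φ (k * X * kᵀ) = φ X) :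
    (ν.map fun k =>
        φ (corner (corner (k.1 * blockSkew (2 * m + 1 + 1) (zeroExtend a) * k.1ᵀ)))) =
      ((volume.restrict (posOrthant (Fin m))).withDensity fun x =>
        ENNReal.ofReal (projectionDensity x a)).map
          fun x => φ (blockSkew (2 * m) (zeroExtend x)) := by
  have hcorner := hφm.comp
    (measurable_corner_corner_conj (blockSkew (2 * m + 1 + 1) (zeroExtend a)))
  have hblock := hφm.comp (measurable_blockSkew_zeroExtend (2 * m) m)
  have hdens := (measurable_projectionDensity a).ennreal_ofReal
  refine Measure.ext_of_lintegral _ fun f hf => ?_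
  have hlaw := lintegral_corner_corner_conj_eq_setLIntegral_posOrthant ν ha hinj (hf.comp hφm)
    fun X hX k hk => congrArg f (hφ X hX k hk)
  have hright := (lintegral_map hf hblock).trans
    (lintegral_withDensity_eq_lintegral_mul (volume.restrict (posOrthant (Fin m))) hdens
      (hf.comp hblock))
  simp only [Pi.mul_apply, mul_comm (ENNReal.ofReal _)] at hright
  exact (lintegral_map hf hcorner).trans (hlaw.trans hright.symm)

lemma integral_corner_corner_conj (ν : Measure (OG (2 * m + 1 + 1)))
    [ν.IsHaarMeasure] [IsProbabilityMeasure ν] {a : Fin (m + 1) → ℝ}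
    (ha : a ∈ posOrthant (Fin (m + 1))) (hinj : Function.Injective a)
    {φ : Matrix (Fin (2 * m)) (Fin (2 * m)) ℝ → ℝ} (hφm : Measurable φ)
    (hφ : ∀ X, Xᵀ = -X → ∀ k ∈ orthogonalGroup (Fin (2 * m)) ℝ, φ (k * X * kᵀ) = φ X) :
    ∫ k, φ (corner (corner (k.1 * blockSkew (2 * m + 1 + 1) (zeroExtend a) * k.1ᵀ))) ∂ν =
      ∫ x in posOrthant (Fin m),
        φ (blockSkew (2 * m) (zeroExtend x)) * projectionDensity x a := by
  have hcorner := hφm.comp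
    (measurable_corner_corner_conj (blockSkew (2 * m + 1 + 1) (zeroExtend a)))
  have hblock := hφm.comp (measurable_blockSkew_zeroExtend (2 * m) m)
  have hdens := (measurable_projectionDensity a).ennreal_ofReal
  calc ∫ k, φ (corner (corner (k.1 * blockSkew (2 * m + 1 + 1) (zeroExtend a) * k.1ᵀ))) ∂ν
      = ∫ t, t ∂(ν.map fun k =>
          φ (corner (corner (k.1 * blockSkew (2 * m + 1 + 1) (zeroExtend a) * k.1ᵀ)))) :=
        (integral_map hcorner.aemeasurable aestronglyMeasurable_id).symm
    _ = ∫ x, φ (blockSkew (2 * m) (zeroExtend x))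
          ∂(volume.restrict (posOrthant (Fin m))).withDensity fun x =>
            ENNReal.ofReal (projectionDensity x a) := by
        rw [map_corner_corner_conj ν ha hinj hφm hφ]
        exact integral_map hblock.aemeasurable aestronglyMeasurable_id
    _ = _ := by
        rw [integral_withDensity_eq_integral_toReal_smul hdens (.of_forall fun _ =>
          ENNReal.ofReal_lt_top)]
        refine setIntegral_congr_fun (measurableSet_posOrthant _) fun x hx => ?_
        simp only [ENNReal.toReal_ofReal (projectionDensity_nonneg hx ha), smul_eq_mul, mul_comm]

end CornerCornerLaw

lemma Dmat_eq_blockSkew {n : ℕ} (a : Fin n → ℝ) : Dmat a = blockSkew (2 * n) (zeroExtend a) := by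
  ext i j
  simp only [Dmat, blockSkew, of_apply, zeroExtend_of_lt a (show i.val / 2 < n by omega)]

lemma Mxa_eq_hingeMatrix {m : ℕ} (x : Fin m → ℝ) (a : Fin (m + 1) → ℝ) (hn : 2 ≤ m + 1) :
    Mxa (n := m + 1) x a hn = hingeMatrix x a := by
  ext b c
  cases b using Fin.cases with
  | zero => simp [Mxa, hingeMatrix]
  | succ j =>
    change (if x j ≤ a c then a c - x j else 0) = max 0 (a c - x j)
    split_ifs with h
    · rw [max_eq_right (sub_nonneg.mpr h)]
    · rw [max_eq_left (sub_nonpos.mpr (not_le.mp h).le)]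

theorem corank_two_projection_general (n : ℕ) (hn : 2 ≤ n)
    (μ : Measure (OG (2 * n))) [μ.IsHaarMeasure] [IsProbabilityMeasure μ]
    (a : Fin n → ℝ) (ha : ∀ j, 0 < a j) (ha' : Function.Injective a)
    {φ : Matrix (Fin (2 * (n - 1))) (Fin (2 * (n - 1))) ℝ → ℝ} (hφm : Measurable φ)
    (hφ : ∀ X, Xᵀ = -X → ∀ k ∈ orthogonalGroup (Fin (2 * (n - 1))) ℝ, φ (k * X * kᵀ) = φ X) :
    ∫ k : OG (2 * n), φ ((k.1 * Dmat a * k.1ᵀ).submatrix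
        (Fin.castLE (Nat.mul_le_mul_left 2 (n.sub_le 1)))
        (Fin.castLE (Nat.mul_le_mul_left 2 (n.sub_le 1)))) ∂μ =
      ∫ x in {x : Fin (n - 1) → ℝ | ∀ j, 0 < x j}, φ (Dmat x) *
        (((Nat.factorial (2 * n - 2) : ℝ) / (Nat.factorial (n - 1) : ℝ)) *
          ((vdm fun j => (x j) ^ 2) / (vdm fun j => (a j) ^ 2)) * (Mxa x a hn).det) := by
  obtain ⟨m, rfl⟩ : ∃ m, n = m + 1 := ⟨n - 1, by omega⟩
  simp only [Dmat_eq_blockSkew]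
  refine (integral_corner_corner_conj μ ha ha' hφm hφ).trans ?_
  refine integral_congr_ae (.of_forall fun x => ?_)
  simp only [Mxa_eq_hingeMatrix]
  rfl

/-- Proposition A.2: eigenvalue PDF for the corank-2 projection of
`k D(a) kᵀ`, `k` Haar distributed on `O(2n)`. -/
theorem corank_two_projection (n : ℕ) (hn : 2 ≤ n)
    (μ : Measure (OG (2 * n))) (hμ : μ.IsHaarMeasure) (hμ1 : IsProbabilityMeasure μ)
    (a : Fin n → ℝ) (ha : ∀ j, 0 < a j) (ha' : Function.Injective a) :
    ∀ φ : Matrix (Fin (2 * (n - 1))) (Fin (2 * (n - 1))) ℝ → ℝ, IsInvTest (2 * (n - 1)) φ →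
      (∫ k : OG (2 * n),
          φ ((((k : Matrix (Fin (2 * n)) (Fin (2 * n)) ℝ) * Dmat a *
              (k : Matrix (Fin (2 * n)) (Fin (2 * n)) ℝ)ᵀ).submatrix
                (Fin.castLE (by omega : 2 * (n - 1) ≤ 2 * n))
                (Fin.castLE (by omega : 2 * (n - 1) ≤ 2 * n)))) ∂μ) =
        ∫ x in {x : Fin (n - 1) → ℝ | ∀ j, 0 < x j},
          φ (Dmat x) *
            (((Nat.factorial (2 * n - 2) : ℝ) / (Nat.factorial (n - 1) : ℝ)) *
              ((vdm fun j => (x j) ^ 2) / (vdm fun j => (a j) ^ 2)) *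
                (Mxa x a hn).det) := by
  exact fun φ ⟨hφm, _, hφ⟩ => corank_two_projection_general n hn μ a ha ha' hφm hφ

end
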